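/- Let T ∈ 𝓔^ω be orientation-preserving with T(π(0)) = π(0) and fix C_* > 0 and λ_* > 1 with |(T^n)'(x)| ≥ C_* λ_*^n for all x and n. Let 𝓓 be a dense subset of 𝓒^1 consisting of C^2 functions. Let f_0 ∈ 𝓒^2 be such that the topological entropy of T restricted to K(f_0,T) is less than (1/3)·log λ_* and such that K(f_0,T) contains no periodic point of T. Then there exist an open neighborhood 𝓤 of f_0 in 𝓒^2 and finitely many φ_1,…,φ_J ∈ 𝓓 such that for every f ∈ 𝓒^2, the set {(t_1,…,t_J) ∈ [0,1]^J : f + t_1φ_1 + ⋯ + t_Jφ_J belongs to 𝓤 and has a supercritical value} has Lebesgue measure zero. -/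

import Mathlib

/-!
Write `T` for the circle map. The derivative of `h^f_i` at `x` is
`Lf = ∑_{k ≥ 1} f'(y_k) / (T^k)'(y_k)`, where `y_0 = x, y_1, y_2, …` is the backward orbit coded by
the word `i` (`Sys.deriv_hSum`). A supercritical value of `f` therefore yields two backward orbits
`y`, `z` in `K(f, T)` with the same base point, first preimages a definite distance apart, and
`Lf y = Lf z` (`Sys.exists_pair`).

*Nondegeneracy.* As `K(f₀, T)` contains no periodic point, all the points `y_1, y_2, …` are distinct,
and `y_1` differs from all the `z_k`. Testing against functions whose derivatives concentrate at
`y_1` shows that `φ ↦ Lφ y - Lφ z` does not vanish on the dense set `D` (`Sys.exists_nonzero`).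
Compactness of the space of pairs gives finitely many `φ_j ∈ D` and `c > 0` such that for all pairs of
backward orbits in a neighbourhood of `K(f₀, T)` some `|Lφ_j y - Lφ_j z|` is at least `c`
(`Sys.exists_family`). The sets `K(f, T)` with `f` close to `f₀` lie in that neighbourhood, by upper
semicontinuity (`Sys.K_usc`).

*Counting.* The entropy bound provides `n` and `κ` with `κ ^ 3 < l ^ n` such that orbit segments of
length `n m` staying near `K(f₀, T)` are covered by about `κ ^ m` Bowen balls
(`Sys.exists_cover_nbhd`). Sort the pairs `(y, z)` according to the Bowen balls of the base point, of
`y_{nm}` and of `z_{nm}`: this makes about `κ ^ {3m}` cells, on each of which all the values of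
`Lf` oscillate by `O(l ^ {-nm})` (`Sys.orbit_close`). The equation `Lf y = Lf z` for
`f + ∑ t_j φ_j` is affine in `t`, so each cell contributes parameters in a slab of the cube of width
`O(l ^ {-nm} / c)` (`volume_slab_le`). The total measure is `O((κ ^ 3 / l ^ n) ^ m)`, which tends to
`0` as `m → ∞` (`Sys.null_params`).
-/


open MeasureTheory Topology Filter Set
open scoped UniformConvergence

noncomputable section

/-- The circle `ℝ/ℤ`. -/
abbrev Circle1 : Type := AddCircle (1 : ℝ)

/-- The canonical representative in `[0,1)` of a point of `ℝ/ℤ`. -/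
noncomputable def rep (z : Circle1) : ℝ := (AddCircle.equivIco 1 0 z : ℝ)

/-- The circle map induced by a lift `F : ℝ → ℝ`. -/
noncomputable def cmap (F : ℝ → ℝ) : Circle1 → Circle1 := fun z => ((F (rep z) : ℝ) : Circle1)

/-- The data determining the `C^r` topology: all derivatives of order `≤ r`, viewed in the
space of functions `ℝ → ℝ` with the uniform-convergence topology. -/
noncomputable def crSeq (r : ℕ∞) (f : ℝ → ℝ) : ℕ → (ℝ →ᵤ ℝ) :=
  fun k => UniformFun.ofFun (if (k : ℕ∞) ≤ r then iteratedDeriv k f else 0)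

/-- The space `𝓒^r` of `C^r` functions `ℝ/ℤ → ℝ`. -/
def CrFun (r : ℕ∞) : Type := {f : Circle1 → ℝ // ContDiff ℝ r fun x : ℝ => f ↑x}

/-- The `C^r` topology on `𝓒^r`. -/
noncomputable instance (r : ℕ∞) : TopologicalSpace (CrFun r) :=
  TopologicalSpace.induced (fun f : CrFun r => crSeq r fun x : ℝ => f.1 ↑x) inferInstance

/-- `F : ℝ → ℝ` is a lift of a `C^r` expanding circle map: it is `C^r`, sends `x+1` to
`F x + d` for a fixed integer `d`, and `|(Fⁿ)'| ≥ C λⁿ` for some `C > 0`, `λ > 1`. -/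
def ExpandingLift (r : ℕ∞) (F : ℝ → ℝ) : Prop :=
  ContDiff ℝ r F ∧ (∃ d : ℤ, ∀ x : ℝ, F (x + 1) = F x + d) ∧
    ∃ C > (0 : ℝ), ∃ l > (1 : ℝ), ∀ n : ℕ, 1 ≤ n → ∀ x : ℝ, C * l ^ n ≤ |deriv (F^[n]) x|

/-- The space `𝓔^r` of (lifts of) `C^r` expanding circle maps, with the `C^r` topology. -/
def ExpMap (r : ℕ∞) : Type := {F : ℝ → ℝ // ExpandingLift r F}

noncomputable instance (r : ℕ∞) : TopologicalSpace (ExpMap r) :=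
  TopologicalSpace.induced (fun F : ExpMap r => crSeq r F.1) inferInstance

/-- `μ` is a `T`-invariant Borel probability measure. -/
def InvProb (T : Circle1 → Circle1) (μ : Measure Circle1) : Prop :=
  IsProbabilityMeasure μ ∧ μ.map T = μ

/-- `β(f,T)`, the maximal ergodic average. -/
noncomputable def beta (f : Circle1 → ℝ) (T : Circle1 → Circle1) : ℝ :=
  sSup ((fun μ : Measure Circle1 => ∫ x, f x ∂μ) '' {μ | InvProb T μ})

/-- `μ` is a maximizing measure for `(f,T)`. -/
def IsMaximizing (f : Circle1 → ℝ) (T : Circle1 → Circle1) (μ : Measure Circle1) : Prop :=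
  InvProb T μ ∧ ∫ x, f x ∂μ = beta f T

/-- `μ` is a periodic measure: an invariant measure supported on a periodic orbit. -/
def IsPeriodicMeasure (T : Circle1 → Circle1) (μ : Measure Circle1) : Prop :=
  InvProb T μ ∧ ∃ x : Circle1, ∃ n : ℕ, 0 < n ∧ T^[n] x = x ∧
    μ (Set.range fun k : ℕ => T^[k] x) = 1

/-- `(f,T)` is uniquely maximized by a periodic measure. -/
def UniqMaxPeriodic (f : Circle1 → ℝ) (T : Circle1 → Circle1) : Prop :=
  ∃ μ : Measure Circle1, IsMaximizing f T μ ∧ IsPeriodicMeasure T μ ∧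
    ∀ ν : Measure Circle1, IsMaximizing f T ν → ν = μ

/-- A (continuous) sub-action for `(f,T)`. -/
def IsSubaction (f : Circle1 → ℝ) (T : Circle1 → Circle1) (g : Circle1 → ℝ) : Prop :=
  Continuous g ∧ ∀ x, g x + f x ≤ g (T x) + beta f T

/-- A calibrated sub-action for `(f,T)`. -/
def IsCalibrated (f : Circle1 → ℝ) (T : Circle1 → Circle1) (g : Circle1 → ℝ) : Prop :=
  IsSubaction f T g ∧ ∀ x, ∃ y, T y = x ∧ g y + f y = g x + beta f T

/-- `G_{f,T}`: the set of Lipschitz calibrated sub-actions of `(f,T)`. -/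
def Gset (f : Circle1 → ℝ) (T : Circle1 → Circle1) : Set (Circle1 → ℝ) :=
  {g | (∃ K : NNReal, LipschitzWith K g) ∧ IsCalibrated f T g}

/-- The set `E_{f,T,g}`. -/
def Eset (f : Circle1 → ℝ) (T : Circle1 → Circle1) (g : Circle1 → ℝ) : Set Circle1 :=
  {x | g x + f x = g (T x) + beta f T}

/-- The set `Λ*_{f,T,g}`. -/
def LambdaStar (f : Circle1 → ℝ) (T : Circle1 → Circle1) (g : Circle1 → ℝ) : Set Circle1 :=
  {x | ∀ n : ℕ, T^[n] x ∈ Eset f T g}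

/-- The set `Λ_{f,T,g}`. -/
def Lambda (f : Circle1 → ℝ) (T : Circle1 → Circle1) (g : Circle1 → ℝ) : Set Circle1 :=
  ⋂ n : ℕ, T^[n] '' LambdaStar f T g

/-- The set `K(f,T)`. -/
def Kset (f : Circle1 → ℝ) (T : Circle1 → Circle1) : Set Circle1 :=
  ⋃ g ∈ Gset f T, Lambda f T g

/-- The `(f,T)`-non-wandering set `Ω(f,T)`. -/
def OmegaSet (f : Circle1 → ℝ) (T : Circle1 → Circle1) : Set Circle1 :=
  {x | ∀ ε > (0 : ℝ), ∃ n : ℕ, 1 ≤ n ∧ ∃ z : Circle1, T^[n] z = x ∧ dist z x < ε ∧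
    |∑ i ∈ Finset.range n, (f (T^[i] z) - beta f T)| < ε}

/-- `A` is a periodic orbit of `T`. -/
def IsPeriodicOrbit (T : Circle1 → Circle1) (A : Set Circle1) : Prop :=
  ∃ x : Circle1, (∃ n : ℕ, 0 < n ∧ T^[n] x = x) ∧ A = Set.range fun k : ℕ => T^[k] x

/-- `A` is a `T`-minimal set: a nonempty compact invariant set with no proper nonempty
compact invariant subset. -/
def IsMinimalSet (T : Circle1 → Circle1) (A : Set Circle1) : Prop :=
  A.Nonempty ∧ IsCompact A ∧ T '' A ⊆ A ∧
    ∀ B ⊆ A, B.Nonempty → IsCompact B → T '' B ⊆ B → B = A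

/-- The space of `C^r` families of functions on the circle with `q` parameters,
i.e. maps `(t,x) ↦ f_t(x)` that are jointly `C^r` (the circle variable via a lift). -/
def FamFun (r : ℕ∞) (q : ℕ) : Type :=
  {G : ((Fin q → ℝ) × ℝ) → ℝ // ContDiff ℝ r G ∧ ∀ t x, G (t, x + 1) = G (t, x)}

noncomputable def famSeq (r : ℕ∞) (q : ℕ) (G : ((Fin q → ℝ) × ℝ) → ℝ) :
    (k : ℕ) → (((Fin q → ℝ) × ℝ) →ᵤ (((Fin q → ℝ) × ℝ) [×k]→L[ℝ] ℝ)) :=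
  fun k => UniformFun.ofFun (if (k : ℕ∞) ≤ r then iteratedFDeriv ℝ k G else 0)

/-- The `C^r` topology on the space of `C^r` families. -/
noncomputable instance (r : ℕ∞) (q : ℕ) : TopologicalSpace (FamFun r q) :=
  TopologicalSpace.induced (fun G : FamFun r q => famSeq r q G.1) inferInstance

/-- The member `f_t : ℝ/ℤ → ℝ` of a family, at the parameter `t`. -/
noncomputable def famMem {r : ℕ∞} {q : ℕ} (G : FamFun r q) (t : Fin q → ℝ) : Circle1 → ℝ :=
  fun z => G.1 (t, rep z)

/-- The product `m_∞` over `ℕ` of Lebesgue measure on `[0,1]`, realised as the pushforward of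
the Haar probability measure of the compact group `(ℝ/ℤ)^ℕ` under the coordinatewise choice of
representatives in `[0,1)`. -/
noncomputable def mInfty : Measure (ℕ → ℝ) :=
  Measure.map (fun (t : ℕ → Circle1) (n : ℕ) => rep (t n))
    (MeasureTheory.Measure.addHaarMeasure (⊤ : TopologicalSpace.PositiveCompacts (ℕ → Circle1)))

/-- `S` is an `N`-dimensionally shy subset of a normed real vector space `V`. -/
def NDimShy {V : Type*} [NormedAddCommGroup V] [NormedSpace ℝ V] (N : ℕ) (S : Set V) : Prop :=
  ∃ φ : Fin N → V, ∀ f : V,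
    volume {t : Fin N → ℝ | (∀ i, t i ∈ Set.Icc (0 : ℝ) 1) ∧ f + ∑ i, t i • φ i ∈ S} = 0

/-- `S` is a finite dimensionally shy subset of a normed real vector space `V`. -/
def FinDimShy {V : Type*} [NormedAddCommGroup V] [NormedSpace ℝ V] (S : Set V) : Prop :=
  ∃ N : ℕ, 0 < N ∧ NDimShy N S

/-- `S` is a shy subset of `V`: there are a compactly supported Borel probability measure `μ`
on `V` and a Borel set `S̃ ⊇ S` all of whose translates are `μ`-null. -/
def IsShy {V : Type*} [NormedAddCommGroup V] [NormedSpace ℝ V] (S : Set V) : Prop :=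
  letI : MeasurableSpace V := borel V
  ∃ μ : Measure V, μ Set.univ = 1 ∧ (∃ K : Set V, IsCompact K ∧ μ K = 1) ∧
    ∃ St : Set V, MeasurableSet St ∧ S ⊆ St ∧
      ∀ v : V, μ ((fun x => x + v) ⁻¹' St) = 0

/-- `S` is a prevalent subset of `V`. -/
def IsPrevalent {V : Type*} [NormedAddCommGroup V] [NormedSpace ℝ V] (S : Set V) : Prop :=
  IsShy Sᶜ

/-- `F` is the (normalized) lift of an orientation-preserving real analytic expanding circle
map of degree `d` fixing `π(0)`. -/
def AnalyticExpandingLift (F : ℝ → ℝ) (d : ℕ) : Prop :=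
  (∀ x : ℝ, AnalyticAt ℝ F x) ∧ (∀ x : ℝ, F (x + 1) = F x + d) ∧ StrictMono F ∧ F 0 = 0 ∧
    2 ≤ d ∧ ∃ C > (0 : ℝ), ∃ l > (1 : ℝ), ∀ n : ℕ, 1 ≤ n → ∀ x : ℝ, C * l ^ n ≤ |deriv (F^[n]) x|

/-- The inverse branches `τ_{i,n} = τ_{i_n} ∘ ⋯ ∘ τ_{i_1}`, where `τ = F⁻¹` and
`τ_i(x) = τ(x+i)`; the word `i` is indexed from `0`, so `i 0` is the first letter `i_1`. -/
noncomputable def tauIter (F : ℝ → ℝ) {d : ℕ} (i : ℕ → Fin d) : ℕ → ℝ → ℝ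
  | 0, x => x
  | n + 1, x => Function.invFun F (tauIter F i n x + ((i n : ℕ) : ℝ))

/-- The function `h^f_i` associated to an infinite word `i`. -/
noncomputable def hSum (F : ℝ → ℝ) {d : ℕ} (i : ℕ → Fin d) (f : Circle1 → ℝ) : ℝ → ℝ :=
  fun x => ∑' n : ℕ,
    (f ((tauIter F i (n + 1) x : ℝ) : Circle1) - f ((tauIter F i (n + 1) 0 : ℝ) : Circle1))

/-- The function `h^f_i` associated to a finite word of length `m` (the first `m` letters
of `i`). -/
noncomputable def hSumFin (F : ℝ → ℝ) {d : ℕ} (i : ℕ → Fin d) (m : ℕ) (f : Circle1 → ℝ) :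
    ℝ → ℝ :=
  fun x => ∑ n ∈ Finset.range m,
    (f ((tauIter F i (n + 1) x : ℝ) : Circle1) - f ((tauIter F i (n + 1) 0 : ℝ) : Circle1))

/-- `i ∈ CL(x,K)`: all backward images of `x` along the word `i` lie over `K`. -/
def WordIn (F : ℝ → ℝ) {d : ℕ} (i : ℕ → Fin d) (x : ℝ) (K : Set Circle1) : Prop :=
  ∀ n : ℕ, 1 ≤ n → ((tauIter F i n x : ℝ) : Circle1) ∈ K

/-- `x` (a real, lying over `K`) is an `f`-supercritical value of `K`. -/
def IsSupercriticalValue (F : ℝ → ℝ) (d : ℕ) (f : Circle1 → ℝ) (K : Set Circle1) (x : ℝ) :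
    Prop :=
  ((x : ℝ) : Circle1) ∈ K ∧ ∃ i j : ℕ → Fin d, WordIn F i x K ∧ WordIn F j x K ∧ i 0 ≠ j 0 ∧
    deriv (hSum F i f) x = deriv (hSum F j f) x

/-- `x` is a critical value of `T|K`. -/
def IsCriticalValue (T : Circle1 → Circle1) (K : Set Circle1) (x : Circle1) : Prop :=
  x ∈ K ∧ ∃ y z, y ∈ K ∧ z ∈ K ∧ y ≠ z ∧ T y = x ∧ T z = x

/-- A critical value `x` of `T|K` is regular: on each side of `x` there is a continuous
inverse branch of `T` selecting the unique preimage in `K`. -/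
def IsRegularCriticalValue (T : Circle1 → Circle1) (K : Set Circle1) (x : Circle1) : Prop :=
  ∃ U : Set Circle1, U ∈ 𝓝 x ∧ IsConnected U ∧
    ∀ b ∈ U \ {x}, ∃ s : Circle1 → Circle1,
      ContinuousOn s (connectedComponentIn (U \ {x}) b) ∧
      (∀ y ∈ connectedComponentIn (U \ {x}) b, T (s y) = y) ∧
      (∀ y ∈ K ∩ connectedComponentIn (U \ {x}) b, T ⁻¹' {y} ∩ K = {s y})

/-- `T|K` is Sturmian-like: every critical value is regular. -/
def SturmianLike (T : Circle1 → Circle1) (K : Set Circle1) : Prop :=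
  ∀ x, IsCriticalValue T K x → IsRegularCriticalValue T K x

/-- `f : ℝ/ℤ → ℝ` is a trigonometric polynomial. -/
def IsTrigPoly (f : Circle1 → ℝ) : Prop :=
  ∃ m : ℕ, ∃ a b : ℕ → ℝ, ∀ x : ℝ,
    f ↑x = a 0 + ∑ k ∈ Finset.range m,
      (a (k + 1) * Real.cos (2 * Real.pi * (k + 1) * x) +
        b (k + 1) * Real.sin (2 * Real.pi * (k + 1) * x))

end

/-! ### The circle and periodic functions -/

lemma coe_rep (z : Circle1) : ((rep z : ℝ) : Circle1) = z := AddCircle.coe_equivIco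

lemma rep_coe (x : ℝ) : rep (x : Circle1) = Int.fract x := by
  simp [rep]

lemma coe_eq_coe {a b : ℝ} (h : (a : Circle1) = b) : ∃ n : ℤ, a - b = n := by
  have : rep (a : Circle1) = rep (b : Circle1) := by rw [h]
  rw [rep_coe, rep_coe] at this
  exact Int.fract_eq_fract.1 this

lemma coe_add_int (a : ℝ) (n : ℤ) : ((a + n : ℝ) : Circle1) = a := by
  have : ((n : ℝ) : Circle1) = 0 := by
    rw [AddCircle.coe_eq_zero_iff]; exact ⟨n, by simp⟩
  rw [AddCircle.coe_add, this, add_zero]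

lemma per_rep {α : Type*} {h : ℝ → α} (hp : ∀ x, h (x + 1) = h x) (x : ℝ) :
    h (rep (x : Circle1)) = h x := by
  rw [rep_coe, ← Int.self_sub_floor]
  have : Function.Periodic h 1 := hp
  simpa using this.sub_zsmul_eq (x := x) ⌊x⌋

lemma dist_coe_le (a b : ℝ) : dist (a : Circle1) b ≤ |a - b| := by
  rw [dist_eq_norm, ← AddCircle.coe_sub]
  rw [AddCircle.norm_eq]
  simpa using round_le (a - b) 0

lemma dist_coe_eq {a b : ℝ} (h : |a - b| ≤ 1 / 2) : dist (a : Circle1) b = |a - b| := by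
  rw [dist_eq_norm, ← AddCircle.coe_sub]
  exact (AddCircle.norm_coe_eq_abs_iff 1 one_ne_zero).2 (by simpa using h)

lemma exists_lift (a : ℝ) (w : Circle1) : ∃ b : ℝ, (b : Circle1) = w ∧ |a - b| = dist (a : Circle1) w := by
  refine ⟨rep w + round (a - rep w), ?_, ?_⟩
  · rw [coe_add_int, coe_rep]
  · have : dist (a : Circle1) w = ‖((a - rep w : ℝ) : Circle1)‖ := by
      rw [dist_eq_norm, AddCircle.coe_sub, coe_rep]
    rw [this, AddCircle.norm_eq]
    simp [sub_sub]

lemma continuous_of_coe {α : Type*} [TopologicalSpace α] {u : Circle1 → α}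
    (h : Continuous fun x : ℝ => u x) : Continuous u :=
  (QuotientAddGroup.isOpenQuotientMap_mk).isQuotientMap.continuous_iff.2 h

lemma per_bdd {h : ℝ → ℝ} (hc : Continuous h) (hp : ∀ x, h (x + 1) = h x) :
    ∃ B > 0, ∀ x, |h x| ≤ B := by
  obtain ⟨B, hB⟩ := (Function.Periodic.isBounded_of_continuous (c := 1) hp one_ne_zero hc).exists_norm_le
  exact ⟨max B 1, by positivity, fun x => (hB _ ⟨x, rfl⟩).trans (le_max_left _ _)⟩

lemma deriv_per {h : ℝ → ℝ} {c : ℝ} (hp : ∀ x, h (x + 1) = h x + c) (x : ℝ) :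
    deriv h (x + 1) = deriv h x := by
  rw [← deriv_comp_add_const, show (fun x => h (x + 1)) = fun x => h x + c from funext hp]
  simp

lemma abs_sub_le_of_deriv {h : ℝ → ℝ} (hd : Differentiable ℝ h) {B : ℝ}
    (hB : ∀ x, |deriv h x| ≤ B) (x y : ℝ) : |h x - h y| ≤ B * |x - y| :=
  Convex.norm_image_sub_le_of_norm_deriv_le (s := univ) (fun x _ => hd x) (fun x _ => hB x)
    convex_univ (mem_univ _) (mem_univ _)

/-! ### The expanding map and its inverse branches -/

/-- The quantitative data of an orientation-preserving expanding lift used below: the expansion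
constants `C ≤ 1 < l`, a bound `M` for the derivative, and a Lipschitz constant `Λ` of its
logarithm. -/
structure Sys (F : ℝ → ℝ) (d : ℕ) (C l M Λ : ℝ) : Prop where
  hC : 0 < C
  hC1 : C ≤ 1
  hl : 1 < l
  hM : 0 < M
  hΛ : 0 ≤ Λ
  diff : Differentiable ℝ F
  per : ∀ x, F (x + 1) = F x + d
  mono : StrictMono F
  surj : Function.Surjective F
  pos : ∀ x, 0 < deriv F x
  exp : ∀ n x, C * l ^ n ≤ deriv (F^[n]) x
  bdd : ∀ x, deriv F x ≤ M
  lip : ∀ x y, |Real.log (deriv F x) - Real.log (deriv F y)| ≤ Λ * |x - y|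
  contd : Continuous (deriv F)

lemma exists_sys {F : ℝ → ℝ} {d : ℕ} (hF : AnalyticExpandingLift F d) {C l : ℝ} (hC : 0 < C)
    (hl : 1 < l) (hexp : ∀ n : ℕ, 1 ≤ n → ∀ x : ℝ, C * l ^ n ≤ |deriv (F^[n]) x|) :
    ∃ C' M Λ : ℝ, Sys F d C' l M Λ := by
  obtain ⟨han, hper, hmono, h0, hd, -⟩ := hF
  have hcd : ContDiff ℝ 2 F := by
    rw [contDiff_iff_contDiffAt]; exact fun x => (han x).contDiffAt
  have hdiff : Differentiable ℝ F := hcd.differentiable (by norm_num)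
  have hcd1 : ContDiff ℝ 1 (deriv F) := by
    have : ContDiff ℝ (1 + 1) F := by norm_num; exact hcd
    exact (contDiff_succ_iff_deriv.1 this).2.2
  have hdper := deriv_per hper
  obtain ⟨M, hM, hMb⟩ := per_bdd hcd1.continuous hdper
  obtain ⟨Λ, hΛ, hΛb⟩ := per_bdd (h := deriv (deriv F)) (hcd1.continuous_deriv le_rfl)
    (deriv_per (c := 0) (by simpa using hdper))
  have hnn : ∀ x, C * l ≤ deriv F x := fun x => by
    have h1 : 0 ≤ deriv F x := hmono.monotone.deriv_nonneg
    simpa [abs_of_nonneg h1] using hexp 1 le_rfl x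
  have hCl : 0 < C * l := by positivity
  refine ⟨min C 1, M, Λ / (C * l), ?_⟩
  have hpos : ∀ x, 0 < deriv F x := fun x => hCl.trans_le (hnn x)
  refine ⟨by positivity, min_le_right _ _, hl, hM, by positivity, hdiff, hper, hmono, ?_, hpos,
    ?_, fun x => (le_abs_self _).trans (hMb x), ?_, hcd1.continuous⟩
  · -- `F n = d n` at integers, so `F` is unbounded on both sides
    have hn : ∀ n : ℤ, F n = d * n := by
      intro n
      induction n using Int.induction_on with
      | zero => simp [h0]
      | succ k ih => push_cast at ih ⊢; rw [hper, ih]; ring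
      | pred k ih =>
        have := hper (-(k : ℝ) - 1)
        push_cast at ih ⊢
        rw [sub_add_cancel, ih] at this
        linarith
    refine hdiff.continuous.surjective ?_ ?_
    · refine hmono.monotone.tendsto_atTop_atTop fun b => ⟨(⌈|b|⌉ : ℤ), ?_⟩
      rw [hn]
      have h1 := Int.le_ceil |b|
      have h2 := le_abs_self b
      have h3 : (2 : ℝ) ≤ d := by exact_mod_cast hd
      nlinarith [abs_nonneg b]
    · refine hmono.monotone.tendsto_atBot_atBot fun b => ⟨((-⌈|b|⌉ : ℤ) : ℝ), ?_⟩
      rw [hn]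
      push_cast
      have h1 := Int.le_ceil |b|
      have h2 := neg_abs_le b
      have h3 : (2 : ℝ) ≤ d := by exact_mod_cast hd
      nlinarith [abs_nonneg b]
  · intro n x
    rcases n with _ | n
    · simp
    · have h1 : 0 ≤ deriv F^[n + 1] x := (hmono.iterate (n + 1)).monotone.deriv_nonneg
      have := hexp (n + 1) (by omega) x
      rw [abs_of_nonneg h1] at this
      refine le_trans ?_ this
      gcongr
      exact min_le_left _ _
  · refine abs_sub_le_of_deriv (h := fun x => Real.log (deriv F x))
      (fun x => ((hcd1.differentiable one_ne_zero) x).log (hpos x).ne') fun x => ?_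
    rw [deriv.log ((hcd1.differentiable one_ne_zero) x) (hpos x).ne', abs_div,
      abs_of_pos (hpos x)]
    exact div_le_div₀ hΛ.le (hΛb x) hCl (hnn x)

/-- The derivative of the circle map. -/
noncomputable def DT (F : ℝ → ℝ) (z : Circle1) : ℝ := deriv F (rep z)

/-- The derivative of the `k`-th iterate of the circle map, as a cocycle. -/
noncomputable def Dk (F : ℝ → ℝ) (k : ℕ) (z : Circle1) : ℝ :=
  ∏ j ∈ Finset.range k, DT F ((cmap F)^[j] z)

namespace Sys
variable {F : ℝ → ℝ} {d : ℕ} {C l M Λ : ℝ}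

lemma hl0 (S : Sys F d C l M Λ) : 0 < l := one_pos.trans S.hl

lemma cmap_coe (S : Sys F d C l M Λ) (x : ℝ) : cmap F (x : Circle1) = ((F x : ℝ) : Circle1) :=
  per_rep (h := fun x => ((F x : ℝ) : Circle1))
    (fun x => by
      show ((F (x + 1) : ℝ) : Circle1) = ((F x : ℝ) : Circle1)
      rw [S.per]; exact_mod_cast coe_add_int (F x) d) x

lemma iter_coe (S : Sys F d C l M Λ) (n : ℕ) (x : ℝ) :
    (cmap F)^[n] (x : Circle1) = ((F^[n] x : ℝ) : Circle1) := by
  induction n generalizing x with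
  | zero => rfl
  | succ n ih => rw [Function.iterate_succ_apply, Function.iterate_succ_apply, S.cmap_coe, ih]

lemma continuous_cmap (S : Sys F d C l M Λ) : Continuous (cmap F) :=
  continuous_of_coe (by
    simp only [S.cmap_coe]
    exact (AddCircle.continuous_mk' 1).comp S.diff.continuous)

lemma DT_coe (S : Sys F d C l M Λ) (x : ℝ) : DT F x = deriv F x :=
  per_rep (deriv_per S.per) x

lemma continuous_DT (S : Sys F d C l M Λ) : Continuous (DT F) :=
  continuous_of_coe (by simp only [S.DT_coe]; exact S.contd)

lemma continuous_Dk (S : Sys F d C l M Λ) (k : ℕ) : Continuous (Dk F k) :=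
  continuous_finsetProd _ fun j _ => S.continuous_DT.comp (S.continuous_cmap.iterate j)

lemma diff_iter (S : Sys F d C l M Λ) (n : ℕ) : Differentiable ℝ F^[n] := S.diff.iterate n

lemma deriv_iter_succ (S : Sys F d C l M Λ) (n : ℕ) (x : ℝ) :
    deriv F^[n + 1] x = deriv F^[n] (F x) * deriv F x := by
  rw [Function.iterate_succ]
  exact deriv_comp x (S.diff_iter n _) (S.diff x)

lemma Dk_coe (S : Sys F d C l M Λ) (n : ℕ) (x : ℝ) : Dk F n x = deriv F^[n] x := by
  induction n generalizing x with
  | zero => simp [Dk]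
  | succ n ih =>
    rw [S.deriv_iter_succ, ← ih, Dk, Finset.prod_range_succ', Dk, ← S.cmap_coe]
    simp [S.DT_coe]

lemma le_Dk (S : Sys F d C l M Λ) (n : ℕ) (z : Circle1) : C * l ^ n ≤ Dk F n z := by
  rw [← coe_rep z, S.Dk_coe]; exact S.exp n _

lemma Cl_pos (S : Sys F d C l M Λ) (n : ℕ) : 0 < C * l ^ n := mul_pos S.hC (pow_pos S.hl0 n)

lemma Dk_pos (S : Sys F d C l M Λ) (n : ℕ) (z : Circle1) : 0 < Dk F n z :=
  (S.Cl_pos n).trans_le (S.le_Dk n z)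

lemma DT_pos (S : Sys F d C l M Λ) (z : Circle1) : 0 < DT F z := S.pos _

lemma log_DT (S : Sys F d C l M Λ) (z w : Circle1) :
    |Real.log (DT F z) - Real.log (DT F w)| ≤ Λ * dist z w := by
  obtain ⟨b, rfl, hb⟩ := exists_lift (rep z) w
  rw [coe_rep] at hb
  rw [← hb, S.DT_coe]
  exact S.lip _ _

lemma expand (S : Sys F d C l M Λ) (n : ℕ) (a b : ℝ) :
    C * l ^ n * |a - b| ≤ |F^[n] a - F^[n] b| := by
  wlog hab : b ≤ a generalizing a b
  · have := this b a (le_of_not_ge hab)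
    rwa [abs_sub_comm a b, abs_sub_comm (F^[n] a)]
  have := mul_sub_le_image_sub_of_le_deriv (S.diff_iter n) (fun x => S.exp n x) hab
  rw [abs_of_nonneg (sub_nonneg.2 hab)]
  exact this.trans (le_abs_self _)

lemma lipF (S : Sys F d C l M Λ) (a b : ℝ) : |F a - F b| ≤ M * |a - b| :=
  abs_sub_le_of_deriv S.diff (fun x => by rw [abs_of_pos (S.pos x)]; exact S.bdd x) a b

/-- Two orbit segments which stay close are lifted by two orbit segments of the lift that stay at
the same distance; hence the distance between them expands. -/
lemma shadow (S : Sys F d C l M Λ) {n : ℕ} {y y' : Circle1}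
    (h : ∀ j ≤ n, dist ((cmap F)^[j] y) ((cmap F)^[j] y') < 1 / (2 * (M + 1))) {j : ℕ}
    (hj : j ≤ n) : C * l ^ (n - j) * dist ((cmap F)^[j] y) ((cmap F)^[j] y') ≤
      dist ((cmap F)^[n] y) ((cmap F)^[n] y') := by
  have hM := S.hM
  obtain ⟨b, rfl, hb⟩ := exists_lift (rep y) y'
  rw [coe_rep] at hb
  have key : ∀ j ≤ n, |F^[j] (rep y) - F^[j] b| = dist ((cmap F)^[j] y) ((cmap F)^[j] (b : Circle1)) := by
    intro j hj
    induction j with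
    | zero => simpa using hb
    | succ j ih =>
      have ih := ih (by omega)
      have h1 := S.lipF (F^[j] (rep y)) (F^[j] b)
      rw [← Function.iterate_succ_apply' F, ← Function.iterate_succ_apply' F, ih] at h1
      have h2 := h j (by omega)
      have h3 : |F^[j + 1] (rep y) - F^[j + 1] b| ≤ 1 / 2 := by
        refine h1.trans ?_
        calc M * _ ≤ M * (1 / (2 * (M + 1))) := by gcongr
          _ ≤ 1 / 2 := by rw [mul_one_div, div_le_div_iff₀ (by positivity) (by positivity)]; linarith
      have h4 := dist_coe_eq h3
      rw [← S.iter_coe, ← S.iter_coe, coe_rep] at h4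
      exact h4.symm
  rw [← key j hj, ← key n le_rfl]
  have := S.expand (n - j) (F^[j] (rep y)) (F^[j] b)
  rwa [← Function.iterate_add_apply, ← Function.iterate_add_apply, Nat.sub_add_cancel hj] at this

/-- Inverse branches contract. -/
lemma back (S : Sys F d C l M Λ) (n : ℕ) (y x' : Circle1) : ∃ y', (cmap F)^[n] y' = x' ∧
    ∀ j ≤ n, C * l ^ (n - j) * dist ((cmap F)^[j] y) ((cmap F)^[j] y') ≤
      dist ((cmap F)^[n] y) x' := by
  obtain ⟨b, rfl, hb⟩ := exists_lift (F^[n] (rep y)) x'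
  obtain ⟨c, rfl⟩ := S.surj.iterate n b
  rw [← S.iter_coe, coe_rep] at hb
  refine ⟨c, S.iter_coe n c, fun j hj => ?_⟩
  have := S.expand (n - j) (F^[j] (rep y)) (F^[j] c)
  rw [← Function.iterate_add_apply, ← Function.iterate_add_apply, Nat.sub_add_cancel hj, hb] at this
  refine le_trans ?_ this
  have h2 := dist_coe_le (F^[j] (rep y)) (F^[j] c)
  rw [← S.iter_coe, ← S.iter_coe, coe_rep] at h2
  have := S.Cl_pos (n - j)
  gcongr

lemma loc_inj (S : Sys F d C l M Λ) {y y' : Circle1} (h : cmap F y = cmap F y')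
    (hd : dist y y' < 1 / (2 * (M + 1))) : y = y' := by
  have hM := S.hM
  have := S.shadow (n := 1) (y := y) (y' := y') (fun j hj => by
    interval_cases j
    · simpa using hd
    · simp [h]; positivity) (j := 0) (by omega)
  simp [h] at this
  have h2 := S.Cl_pos 1
  rw [pow_one] at h2
  exact dist_le_zero.1 (nonpos_of_mul_nonpos_right this h2)

end Sys

/-! ### The derivative of `h^f_i` as a function of a backward orbit -/

/-- The derivative of a function on the circle. -/
noncomputable def dper (f : Circle1 → ℝ) (z : Circle1) : ℝ := deriv (fun x : ℝ => f x) (rep z)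

/-- For a backward orbit `y₀, y₁, …` of the circle map `T` and `u = f'`, the value
`∑_{k ≥ 1} f'(y_k) / (T^k)'(y_k)`, which is the derivative of `h^f_i` at `y₀` for the word `i`
coding the backward orbit. -/
noncomputable def Lf (F : ℝ → ℝ) (u : Circle1 → ℝ) (y : ℕ → Circle1) : ℝ :=
  ∑' k : ℕ, u (y (k + 1)) / Dk F (k + 1) (y (k + 1))

/-- `y` is a backward orbit of the circle map induced by `F`. -/
def IsBack (F : ℝ → ℝ) (y : ℕ → Circle1) : Prop := ∀ k, cmap F (y (k + 1)) = y k

lemma coe_per (f : Circle1 → ℝ) (x : ℝ) : f ((x + 1 : ℝ) : Circle1) = f x := by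
  have := coe_add_int x 1
  rw [Int.cast_one] at this
  rw [this]

lemma dper_coe (f : Circle1 → ℝ) (x : ℝ) : dper f x = deriv (fun x : ℝ => f x) x :=
  per_rep (deriv_per (c := 0) (fun x => by rw [add_zero, coe_per f])) x

lemma continuous_dper {f : Circle1 → ℝ} (hf : ContDiff ℝ 1 fun x : ℝ => f x) :
    Continuous (dper f) :=
  continuous_of_coe (by simp only [dper_coe]; exact hf.continuous_deriv le_rfl)

lemma bdd_of_continuous {u : Circle1 → ℝ} (hu : Continuous u) : ∃ B > 0, ∀ z, |u z| ≤ B := by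
  obtain ⟨B, hB, h⟩ := per_bdd (h := fun x : ℝ => u x)
    (hu.comp (AddCircle.continuous_mk' 1)) (fun x => coe_per u x)
  exact ⟨B, hB, fun z => by rw [← coe_rep z]; exact h _⟩

/-- A function on the circle whose derivative is bounded by `B` is `B`-Lipschitz. -/
lemma lip_of_dper {f : Circle1 → ℝ} (hf : Differentiable ℝ fun x : ℝ => f x) {B : ℝ}
    (hB : ∀ x : ℝ, |deriv (fun x : ℝ => f x) x| ≤ B) (z w : Circle1) :
    |f z - f w| ≤ B * dist z w := by
  obtain ⟨b, rfl, hb⟩ := exists_lift (rep z) w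
  rw [coe_rep] at hb
  have := abs_sub_le_of_deriv hf hB (rep z) b
  rwa [hb, coe_rep] at this

lemma dper_lip {f : Circle1 → ℝ} (hf : ContDiff ℝ 2 fun x : ℝ => f x) :
    ∃ R > 0, ∀ z w, |dper f z - dper f w| ≤ R * dist z w := by
  have h1 : ContDiff ℝ 1 (fun x : ℝ => dper f x) := by
    simp only [dper_coe]
    have : ContDiff ℝ (1 + 1) fun x : ℝ => f x := by norm_num; exact hf
    exact (contDiff_succ_iff_deriv.1 this).2.2
  obtain ⟨R, hR, h⟩ := per_bdd (h := deriv (fun x : ℝ => dper f x)) (h1.continuous_deriv le_rfl)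
    (deriv_per (c := 0) fun x => by rw [add_zero, coe_per (dper f)])
  exact ⟨R, hR, lip_of_dper (h1.differentiable one_ne_zero) h⟩

lemma back_iter {F : ℝ → ℝ} {y : ℕ → Circle1} (hy : IsBack F y) (j k : ℕ) :
    (cmap F)^[j] (y (k + j)) = y k := by
  induction j with
  | zero => rfl
  | succ j ih => rw [Function.iterate_succ_apply, ← add_assoc, hy, ih]

lemma abs_inv_sub_inv_le {a b m δ : ℝ} (hm : 0 < m) (ha : m ≤ a) (hb : m ≤ b)
    (h : |Real.log a - Real.log b| ≤ δ) : |a⁻¹ - b⁻¹| ≤ m⁻¹ * δ := by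
  wlog hab : a ≤ b generalizing a b
  · rw [abs_sub_comm]
    exact this hb ha (by rwa [abs_sub_comm]) (le_of_not_ge hab)
  have ha0 : 0 < a := hm.trans_le ha
  have hb0 : 0 < b := hm.trans_le hb
  have h1 : b⁻¹ ≤ a⁻¹ := by gcongr
  rw [abs_of_nonneg (sub_nonneg.2 h1)]
  have h2 := Real.one_sub_inv_le_log_of_pos (div_pos hb0 ha0)
  rw [Real.log_div hb0.ne' ha0.ne', inv_div] at h2
  have h3 : 1 - a / b ≤ δ := by
    have := (abs_le.1 h).1
    linarith
  have h4 : 0 ≤ 1 - a / b := by rw [sub_nonneg, div_le_one hb0]; exact hab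
  calc a⁻¹ - b⁻¹ = a⁻¹ * (1 - a / b) := by field_simp
    _ ≤ m⁻¹ * δ := by gcongr

namespace Sys
variable {F : ℝ → ℝ} {d : ℕ} {C l M Λ : ℝ}

lemma q_lt (S : Sys F d C l M Λ) : l⁻¹ < 1 := inv_lt_one_of_one_lt₀ S.hl

lemma q_pos (S : Sys F d C l M Λ) : 0 < l⁻¹ := inv_pos.2 S.hl0

lemma inv_Dk_le (S : Sys F d C l M Λ) (k : ℕ) (z : Circle1) : (Dk F k z)⁻¹ ≤ C⁻¹ * l⁻¹ ^ k := by
  rw [inv_pow, ← mul_inv]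
  exact inv_anti₀ (S.Cl_pos k) (S.le_Dk k z)

lemma term_le (S : Sys F d C l M Λ) {u : Circle1 → ℝ} {B : ℝ} (hB : ∀ z, |u z| ≤ B) (k : ℕ)
    (z : Circle1) : |u z / Dk F k z| ≤ B * C⁻¹ * l⁻¹ ^ k := by
  rw [div_eq_mul_inv, abs_mul, abs_of_pos (inv_pos.2 (S.Dk_pos k z)), mul_assoc]
  have := inv_pos.2 (S.Dk_pos k z)
  exact mul_le_mul (hB z) (S.inv_Dk_le k z) this.le ((abs_nonneg _).trans (hB z))

lemma summable_bound (S : Sys F d C l M Λ) (A : ℝ) : Summable fun k : ℕ => A * l⁻¹ ^ (k + 1) := by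
  have := (summable_geometric_of_lt_one S.q_pos.le S.q_lt).mul_left (A * l⁻¹)
  refine this.congr fun k => ?_
  rw [pow_succ]; ring

lemma summable_L (S : Sys F d C l M Λ) {u : Circle1 → ℝ} {B : ℝ} (hB : ∀ z, |u z| ≤ B)
    (y : ℕ → Circle1) : Summable fun k : ℕ => u (y (k + 1)) / Dk F (k + 1) (y (k + 1)) :=
  Summable.of_norm_bounded (S.summable_bound (B * C⁻¹)) fun k => S.term_le hB (k + 1) _

lemma tsum_q (S : Sys F d C l M Λ) (A : ℝ) : ∑' k : ℕ, A * l⁻¹ ^ (k + 1) = A * (l - 1)⁻¹ := by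
  have h : ∀ k : ℕ, A * l⁻¹ ^ (k + 1) = (A * l⁻¹) * l⁻¹ ^ k := fun k => by rw [pow_succ]; ring
  simp_rw [h]
  rw [tsum_mul_left, tsum_geometric_of_lt_one S.q_pos.le S.q_lt]
  have := S.hl0
  have : l - 1 ≠ 0 := (sub_pos.2 S.hl).ne'
  have : 1 - l⁻¹ ≠ 0 := (sub_pos.2 S.q_lt).ne'
  field_simp

lemma Lf_le (S : Sys F d C l M Λ) {u : Circle1 → ℝ} {B : ℝ} (hB : ∀ z, |u z| ≤ B)
    (y : ℕ → Circle1) : |Lf F u y| ≤ B * C⁻¹ * (l - 1)⁻¹ := by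
  rw [← S.tsum_q, ← Real.norm_eq_abs, Lf]
  exact tsum_of_norm_bounded (S.summable_bound (B * C⁻¹)).hasSum fun k => S.term_le hB (k + 1) _

lemma Lf_continuous (S : Sys F d C l M Λ) {u : Circle1 → ℝ} (hu : Continuous u) :
    Continuous (Lf F u) := by
  obtain ⟨B, -, hB⟩ := bdd_of_continuous hu
  refine continuous_tsum (fun k => ?_) (S.summable_bound (B * C⁻¹))
    fun k y => S.term_le hB (k + 1) _
  exact (hu.comp (continuous_apply (k + 1))).div
    ((S.continuous_Dk (k + 1)).comp (continuous_apply (k + 1))) fun y => (S.Dk_pos _ _).ne'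

lemma Lf_add (S : Sys F d C l M Λ) {u v : Circle1 → ℝ} (hu : Continuous u) (hv : Continuous v)
    (y : ℕ → Circle1) : Lf F (fun z => u z + v z) y = Lf F u y + Lf F v y := by
  obtain ⟨B, -, hB⟩ := bdd_of_continuous hu
  obtain ⟨B', -, hB'⟩ := bdd_of_continuous hv
  rw [Lf, Lf, Lf, ← (S.summable_L hB y).tsum_add (S.summable_L hB' y)]
  simp only [add_div]

lemma Lf_smul (c : ℝ) (u : Circle1 → ℝ) (y : ℕ → Circle1) :
    Lf F (fun z => c * u z) y = c * Lf F u y := by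
  rw [Lf, Lf, ← tsum_mul_left]
  simp only [mul_div_assoc]

lemma Lf_sum (S : Sys F d C l M Λ) {J : ℕ} {u : Circle1 → ℝ} {v : Fin J → Circle1 → ℝ}
    (hu : Continuous u) (hv : ∀ j, Continuous (v j)) (t : Fin J → ℝ) (y : ℕ → Circle1) :
    Lf F (fun z => u z + ∑ j, t j * v j z) y = Lf F u y + ∑ j, t j * Lf F (v j) y := by
  have key : ∀ s : Finset (Fin J), Lf F (fun z => u z + ∑ j ∈ s, t j * v j z) y =
      Lf F u y + ∑ j ∈ s, t j * Lf F (v j) y := by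
    classical
    intro s
    induction s using Finset.induction_on with
    | empty => simp
    | insert a s ha ih =>
      rw [Finset.sum_insert ha, add_left_comm, ← ih, ← Lf_smul, add_comm,
        ← S.Lf_add (u := fun z => u z + ∑ j ∈ s, t j * v j z) (v := fun z => t a * v a z)
          (by fun_prop) (continuous_const.mul (hv a))]
      congr 1
      funext z
      rw [Finset.sum_insert ha]; ring
  exact key _

lemma geom_le (S : Sys F d C l M Λ) (k : ℕ) :
    ∑ j ∈ Finset.range k, l⁻¹ ^ (k - j) ≤ (l - 1)⁻¹ := by
  have h1 := S.tsum_q 1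
  rw [one_mul] at h1
  rw [← h1]
  have h2 := Finset.sum_range_reflect (fun m => 1 * l⁻¹ ^ (m + 1)) k
  have h3 := (S.summable_bound 1).sum_le_tsum (Finset.range k)
    (fun i _ => by have := S.q_pos; positivity)
  rw [← h2] at h3
  refine le_trans (le_of_eq (Finset.sum_congr rfl fun j hj => ?_)) h3
  rw [one_mul]
  congr 1
  have := Finset.mem_range.1 hj
  omega

/-- Bounded distortion along two orbit segments which stay close. -/
lemma distortion (S : Sys F d C l M Λ) {k : ℕ} {y y' : Circle1}
    (h : ∀ j ≤ k, dist ((cmap F)^[j] y) ((cmap F)^[j] y') < 1 / (2 * (M + 1))) :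
    |Real.log (Dk F k y) - Real.log (Dk F k y')| ≤
      Λ * C⁻¹ * (l - 1)⁻¹ * dist ((cmap F)^[k] y) ((cmap F)^[k] y') := by
  have hΛ := S.hΛ
  have hC := S.hC
  have hl0 := S.hl0
  have h1 : ∀ z, Real.log (Dk F k z) = ∑ j ∈ Finset.range k, Real.log (DT F ((cmap F)^[j] z)) :=
    fun z => Real.log_prod fun j _ => (S.DT_pos _).ne'
  rw [h1, h1, ← Finset.sum_sub_distrib]
  set D := dist ((cmap F)^[k] y) ((cmap F)^[k] y') with hD
  have hD0 : 0 ≤ D := dist_nonneg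
  calc _ ≤ ∑ j ∈ Finset.range k, Λ * C⁻¹ * D * l⁻¹ ^ (k - j) := by
        refine (Finset.abs_sum_le_sum_abs _ _).trans (Finset.sum_le_sum fun j hj => ?_)
        refine (S.log_DT _ _).trans ?_
        have h2 := S.shadow h (Finset.mem_range.1 hj).le
        have h3 : dist ((cmap F)^[j] y) ((cmap F)^[j] y') ≤ C⁻¹ * D * l⁻¹ ^ (k - j) := by
          rw [mul_comm, ← le_div_iff₀ (S.Cl_pos _)] at h2
          refine h2.trans (le_of_eq ?_)
          rw [← hD, inv_pow]; field_simp
        calc _ ≤ Λ * (C⁻¹ * D * l⁻¹ ^ (k - j)) := by gcongr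
          _ = _ := by ring
    _ = Λ * C⁻¹ * D * ∑ j ∈ Finset.range k, l⁻¹ ^ (k - j) := by rw [Finset.mul_sum]
    _ ≤ Λ * C⁻¹ * D * (l - 1)⁻¹ := by gcongr; exact S.geom_le k
    _ = _ := by ring

lemma term_close (S : Sys F d C l M Λ) {B R : ℝ} (hB0 : 0 ≤ B) (hR0 : 0 ≤ R)
    {u : Circle1 → ℝ} (hB : ∀ z, |u z| ≤ B)
    (hR : ∀ z w, |u z - u w| ≤ R * dist z w) {k : ℕ} {y y' : Circle1}
    (h : ∀ j ≤ k, dist ((cmap F)^[j] y) ((cmap F)^[j] y') < 1 / (2 * (M + 1))) :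
    |u y / Dk F k y - u y' / Dk F k y'| ≤
      C⁻¹ * (R * C⁻¹ + B * (Λ * C⁻¹ * (l - 1)⁻¹)) *
        dist ((cmap F)^[k] y) ((cmap F)^[k] y') * l⁻¹ ^ k := by
  have hC := S.hC
  have hl0 := S.hl0
  set D := dist ((cmap F)^[k] y) ((cmap F)^[k] y') with hD
  have hD0 : 0 ≤ D := dist_nonneg
  have h1 := abs_inv_sub_inv_le (S.Cl_pos k) (S.le_Dk k y) (S.le_Dk k y') (S.distortion h)
  have h2 : dist y y' ≤ C⁻¹ * D := by
    have h2 := S.shadow h (Nat.zero_le k)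
    simp only [Nat.sub_zero, Function.iterate_zero, id_eq] at h2
    rw [← hD] at h2
    rw [inv_mul_eq_div, le_div_iff₀ hC, mul_comm]
    refine le_trans ?_ h2
    have := one_le_pow₀ S.hl.le (n := k)
    have h5 : 0 ≤ C * dist y y' := by positivity
    calc C * dist y y' ≤ (C * dist y y') * l ^ k := le_mul_of_one_le_right h5 this
      _ = _ := by ring
  have e : u y / Dk F k y - u y' / Dk F k y' =
      (u y - u y') * (Dk F k y)⁻¹ + u y' * ((Dk F k y)⁻¹ - (Dk F k y')⁻¹) := by
    rw [div_eq_mul_inv, div_eq_mul_inv]; ring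
  have hp := inv_pos.2 (S.Dk_pos k y)
  rw [e]
  calc _ ≤ |u y - u y'| * (Dk F k y)⁻¹ + |u y'| * |(Dk F k y)⁻¹ - (Dk F k y')⁻¹| := by
        refine (abs_add_le _ _).trans (le_of_eq ?_)
        rw [abs_mul, abs_mul, abs_of_pos hp]
    _ ≤ (R * (C⁻¹ * D)) * (C⁻¹ * l⁻¹ ^ k) +
        B * ((C * l ^ k)⁻¹ * (Λ * C⁻¹ * (l - 1)⁻¹ * D)) := by
        gcongr
        · exact (hR _ _).trans (by gcongr)
        · exact S.inv_Dk_le k y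
        · exact hB _
    _ = _ := by rw [mul_inv, inv_pow]; ring

/-- If two backward orbits stay close up to time `n`, the values of `Lf` on them are close, with
constants uniform over `u` with given bounds. -/
lemma Lf_close (S : Sys F d C l M Λ) {B R : ℝ} (hB0 : 0 ≤ B) (hR0 : 0 ≤ R) :
    ∃ A > 0, ∀ u : Circle1 → ℝ, (∀ z, |u z| ≤ B) → (∀ z w, |u z - u w| ≤ R * dist z w) →
      ∀ y y' : ℕ → Circle1, IsBack F y → IsBack F y' → ∀ n : ℕ,
        (∀ k ≤ n, dist (y k) (y' k) < 1 / (2 * (M + 1))) →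
        |Lf F u y - Lf F u y'| ≤ A * (dist (y 0) (y' 0) + l⁻¹ ^ n) := by
  have hC := S.hC
  have hΛ := S.hΛ
  have hl1 : 0 < l - 1 := sub_pos.2 S.hl
  have hq := S.q_pos
  set A₁ := C⁻¹ * (R * C⁻¹ + B * (Λ * C⁻¹ * (l - 1)⁻¹)) with hA₁
  have hA₁0 : 0 ≤ A₁ := by positivity
  refine ⟨A₁ * (l - 1)⁻¹ + 2 * (B * C⁻¹ * (l - 1)⁻¹) + 1, by positivity, ?_⟩
  intro u hB hR y y' hy hy' n hn
  have hs := S.summable_L hB y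
  have hs' := S.summable_L hB y'
  set D := dist (y 0) (y' 0) with hD
  have hD0 : 0 ≤ D := dist_nonneg
  have htail : ∀ w : ℕ → Circle1, |∑' k : ℕ, u (w (k + n + 1)) / Dk F (k + n + 1) (w (k + n + 1))| ≤
      B * C⁻¹ * (l - 1)⁻¹ * l⁻¹ ^ n := by
    intro w
    have h1 : B * C⁻¹ * (l - 1)⁻¹ * l⁻¹ ^ n = B * C⁻¹ * l⁻¹ ^ n * (l - 1)⁻¹ := by ring
    rw [h1, ← S.tsum_q, ← Real.norm_eq_abs]
    refine tsum_of_norm_bounded (S.summable_bound _).hasSum fun k => ?_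
    refine (S.term_le hB (k + n + 1) _).trans (le_of_eq ?_)
    ring
  rw [Lf, Lf, ← hs.sum_add_tsum_nat_add n, ← hs'.sum_add_tsum_nat_add n]
  have hhead : |∑ k ∈ Finset.range n, u (y (k + 1)) / Dk F (k + 1) (y (k + 1)) -
      ∑ k ∈ Finset.range n, u (y' (k + 1)) / Dk F (k + 1) (y' (k + 1))| ≤
      A₁ * D * (l - 1)⁻¹ := by
    rw [← Finset.sum_sub_distrib, ← S.tsum_q]
    refine (Finset.abs_sum_le_sum_abs _ _).trans ?_
    refine le_trans (Finset.sum_le_sum fun k hk => ?_)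
      ((S.summable_bound (A₁ * D)).sum_le_tsum (Finset.range n) fun k _ => by positivity)
    have hk := Finset.mem_range.1 hk
    have h0 : ∀ w : ℕ → Circle1, IsBack F w → (cmap F)^[k + 1] (w (k + 1)) = w 0 := fun w hw => by
      simpa using back_iter hw (k + 1) 0
    have := S.term_close hB0 hR0 hB hR (k := k + 1) (y := y (k + 1)) (y' := y' (k + 1)) (by
      intro j hj
      have e : k + 1 = (k + 1 - j) + j := by omega
      rw [e, back_iter hy, back_iter hy']
      exact hn _ (by omega))
    rwa [h0 y hy, h0 y' hy'] at this
  have h1 := htail y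
  have h2 := htail y'
  have hqn : 0 ≤ l⁻¹ ^ n := by positivity
  have e1 : 0 ≤ A₁ * (l - 1)⁻¹ * l⁻¹ ^ n := by positivity
  have e2 : 0 ≤ 2 * (B * C⁻¹ * (l - 1)⁻¹) * D := by positivity
  rw [abs_le] at hhead h1 h2 ⊢
  constructor <;> nlinarith

lemma iF_right (S : Sys F d C l M Λ) (x : ℝ) : F (Function.invFun F x) = x :=
  Function.rightInverse_invFun S.surj x

lemma iF_left (S : Sys F d C l M Λ) (x : ℝ) : Function.invFun F (F x) = x :=
  Function.leftInverse_invFun S.mono.injective x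

lemma iF_hasDerivAt (S : Sys F d C l M Λ) (x : ℝ) :
    HasDerivAt (Function.invFun F) (deriv F (Function.invFun F x))⁻¹ x := by
  have hm : StrictMono (Function.invFun F) := fun a b hab => by
    rw [← S.mono.lt_iff_lt, S.iF_right, S.iF_right]; exact hab
  have hc : Continuous (Function.invFun F) :=
    hm.monotone.continuous_of_surjective fun x => ⟨F x, S.iF_left x⟩
  exact HasDerivAt.of_local_left_inverse hc.continuousAt (S.diff _).hasDerivAt (S.pos _).ne'
    (Eventually.of_forall S.iF_right)

lemma tau_back (S : Sys F d C l M Λ) (i : ℕ → Fin d) (x : ℝ) :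
    IsBack F fun k => ((tauIter F i k x : ℝ) : Circle1) := by
  intro k
  show cmap F ((tauIter F i (k + 1) x : ℝ) : Circle1) = _
  rw [S.cmap_coe, tauIter, S.iF_right]
  exact_mod_cast coe_add_int (tauIter F i k x) ((i k : ℕ) : ℤ)

lemma tau_hasDerivAt (S : Sys F d C l M Λ) (i : ℕ → Fin d) (n : ℕ) (x : ℝ) :
    HasDerivAt (tauIter F i n) (Dk F n ((tauIter F i n x : ℝ) : Circle1))⁻¹ x := by
  induction n with
  | zero =>
    have h1 : HasDerivAt (tauIter F i 0) 1 x := hasDerivAt_id' x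
    simpa [Dk] using h1
  | succ n ih =>
    have h1 := (S.iF_hasDerivAt (tauIter F i n x + ((i n : ℕ) : ℝ))).comp x
      (ih.add_const ((i n : ℕ) : ℝ))
    have h2 : Dk F (n + 1) ((tauIter F i (n + 1) x : ℝ) : Circle1) =
        deriv F (tauIter F i (n + 1) x) * Dk F n ((tauIter F i n x : ℝ) : Circle1) := by
      rw [Dk, Finset.prod_range_succ', mul_comm]
      simp only [Function.iterate_zero, id_eq, S.DT_coe, Function.iterate_succ_apply]
      rw [S.tau_back i x n]; rfl
    rw [h2, mul_inv]
    exact h1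

lemma deriv_hSum (S : Sys F d C l M Λ) (i : ℕ → Fin d) {f : Circle1 → ℝ}
    (hf : ContDiff ℝ 1 fun x : ℝ => f x) (x : ℝ) :
    deriv (hSum F i f) x = Lf F (dper f) fun k => ((tauIter F i k x : ℝ) : Circle1) := by
  obtain ⟨B, -, hB⟩ := bdd_of_continuous (continuous_dper hf)
  refine HasDerivAt.deriv ?_
  refine hasDerivAt_tsum (S.summable_bound (B * C⁻¹))
    (g := fun n x => f ((tauIter F i (n + 1) x : ℝ) : Circle1) -
      f ((tauIter F i (n + 1) 0 : ℝ) : Circle1))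
    (g' := fun n x => dper f ((tauIter F i (n + 1) x : ℝ) : Circle1) /
      Dk F (n + 1) ((tauIter F i (n + 1) x : ℝ) : Circle1))
    (fun n y => ?_) (fun n y => S.term_le hB (n + 1) _) (y₀ := 0) (by simp [summable_zero]) x
  have h1 : HasDerivAt (fun x : ℝ => f x) (dper f ((tauIter F i (n + 1) y : ℝ) : Circle1))
      (tauIter F i (n + 1) y) := by
    rw [dper_coe]; exact (hf.differentiable one_ne_zero _).hasDerivAt
  have h2 := (h1.comp y (S.tau_hasDerivAt i (n + 1) y)).sub_const
    (f ((tauIter F i (n + 1) 0 : ℝ) : Circle1))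
  rw [div_eq_mul_inv]
  exact h2

end Sys

/-! ### Upper semicontinuity of `K(f, T)` -/

lemma cr_near {r : ℕ∞} (f : CrFun r) {k : ℕ} (hk : (k : ℕ∞) ≤ r) {ε : ℝ} (hε : 0 < ε) :
    ∀ᶠ g : CrFun r in 𝓝 f, ∀ x : ℝ, |iteratedDeriv k (fun x : ℝ => g.1 x) x -
      iteratedDeriv k (fun x : ℝ => f.1 x) x| < ε := by
  have h0 : Continuous fun g : CrFun r => crSeq r (fun x : ℝ => g.1 x) := continuous_induced_dom
  have h1 : Continuous fun g : CrFun r => crSeq r (fun x : ℝ => g.1 x) k := continuous_pi_iff.1 h0 k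
  have h2 := h1.tendsto f
  rw [UniformFun.tendsto_iff_tendstoUniformly, Metric.tendstoUniformly_iff] at h2
  filter_upwards [h2 ε hε] with g hg x
  have := hg x
  simpa [crSeq, hk, Real.dist_eq, abs_sub_comm] using this

lemma cr_cont {r : ℕ∞} (f : CrFun r) : Continuous f.1 := continuous_of_coe f.2.continuous

lemma beta_close (T : Circle1 → Circle1) {f g : Circle1 → ℝ} (hf : Continuous f)
    (hg : Continuous g) {ε : ℝ} (h : ∀ z, |f z - g z| ≤ ε) : |beta f T - beta g T| ≤ ε := by
  have hε : 0 ≤ ε := (abs_nonneg _).trans (h 0)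
  -- one inequality suffices, by symmetry
  suffices H : ∀ f g : Circle1 → ℝ, Continuous f → Continuous g → (∀ z, |f z - g z| ≤ ε) →
      beta f T ≤ beta g T + ε by
    have h1 := H f g hf hg h
    have h2 := H g f hg hf fun z => by rw [abs_sub_comm]; exact h z
    rw [abs_le]; constructor <;> linarith
  intro f g hf hg h
  have hInteg : ∀ {u : Circle1 → ℝ}, Continuous u → ∀ μ : Measure Circle1, InvProb T μ →
      Integrable u μ := fun hu μ hμ => by
    have := hμ.1
    obtain ⟨B, -, hB⟩ := bdd_of_continuous hu
    exact Integrable.of_bound hu.aestronglyMeasurable B (Eventually.of_forall hB)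
  rcases ({μ | InvProb T μ} : Set (Measure Circle1)).eq_empty_or_nonempty with he | hne
  · simp [beta, he, hε]
  · refine csSup_le (hne.image _) ?_
    rintro _ ⟨μ, hμ, rfl⟩
    have hμ' := hμ.1
    have h1 : ∫ x, f x ∂μ ≤ ∫ x, (g x + ε) ∂μ := by
      refine integral_mono (hInteg hf μ hμ) ((hInteg hg μ hμ).add (integrable_const _)) fun z => ?_
      have := (abs_le.1 (h z)).2
      show f z ≤ g z + ε
      linarith
    rw [integral_add (hInteg hg μ hμ) (integrable_const _)] at h1
    simp only [integral_const, probReal_univ, smul_eq_mul, one_mul] at h1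
    have h2 : ∫ x, g x ∂μ ≤ beta g T := by
      refine le_csSup ?_ ⟨μ, hμ, rfl⟩
      obtain ⟨B, -, hB⟩ := bdd_of_continuous hg
      refine ⟨B, ?_⟩
      rintro _ ⟨ν, hν, rfl⟩
      have hν' := hν.1
      have := integral_mono (hInteg hg ν hν) (integrable_const B) fun z => (abs_le.1 (hB z)).2
      simpa using this
    exact h1.trans (by linarith)

lemma subaction_iter {T : Circle1 → Circle1} {f g : Circle1 → ℝ} (h : IsSubaction f T g) (n : ℕ)
    (y : Circle1) : g y + ∑ j ∈ Finset.range n, (f (T^[j] y) - beta f T) ≤ g (T^[n] y) := by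
  induction n with
  | zero => simp
  | succ n ih =>
    rw [Finset.sum_range_succ, Function.iterate_succ_apply']
    have := h.2 (T^[n] y)
    linarith

lemma calibrated_iter {T : Circle1 → Circle1} {f g : Circle1 → ℝ} (h : IsCalibrated f T g)
    (n : ℕ) (x : Circle1) : ∃ y, T^[n] y = x ∧
      g y + ∑ j ∈ Finset.range n, (f (T^[j] y) - beta f T) = g x := by
  induction n with
  | zero => exact ⟨x, rfl, by simp⟩
  | succ n ih =>
    obtain ⟨y, hy, hg⟩ := ih
    obtain ⟨z, hz, hgz⟩ := h.2 y
    refine ⟨z, by rw [Function.iterate_succ_apply, hz, hy], ?_⟩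
    rw [Finset.sum_range_succ']
    simp only [Function.iterate_succ_apply, hz, Function.iterate_zero, id_eq]
    linarith

/-- The image of a point of `K(f, T)` under `T` stays in `K(f, T)`. -/
lemma Lambda_invariant {T : Circle1 → Circle1} {f : Circle1 → ℝ} {x : Circle1}
    (hx : x ∈ Kset f T) : T x ∈ Kset f T := by
  simp only [Kset, mem_iUnion, exists_prop] at hx ⊢
  obtain ⟨g, hg, hx⟩ := hx
  refine ⟨g, hg, mem_iInter.2 fun n => ?_⟩
  obtain ⟨w, hw, rfl⟩ := mem_iInter.1 hx n
  refine ⟨T w, fun m => ?_, ?_⟩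
  · rw [← Function.iterate_succ_apply]; exact hw (m + 1)
  · rw [← Function.iterate_succ_apply, Function.iterate_succ_apply']

namespace Sys
variable {F : ℝ → ℝ} {d : ℕ} {C l M Λ : ℝ}

/-- Lipschitz calibrated sub-actions have a Lipschitz constant controlled by that of `f`: compare
`g` at two points along a calibrated backward orbit of length `n` and let `n → ∞`. -/
lemma calib_lip (S : Sys F d C l M Λ) {f g : Circle1 → ℝ} {R : ℝ} (hR : 0 ≤ R)
    (hf : ∀ z w, |f z - f w| ≤ R * dist z w) (hg : g ∈ Gset f (cmap F)) (x x' : Circle1) :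
    |g x - g x'| ≤ R * C⁻¹ * (l - 1)⁻¹ * dist x x' := by
  have hC := S.hC
  suffices H : ∀ x x', g x - g x' ≤ R * C⁻¹ * (l - 1)⁻¹ * dist x x' by
    have h1 := H x x'
    have h2 := H x' x
    rw [dist_comm] at h2
    rw [abs_le]; constructor <;> linarith
  intro x x'
  obtain ⟨⟨K, hK⟩, hcal⟩ := hg
  set D := dist x x' with hD
  have hD0 : 0 ≤ D := dist_nonneg
  have key : ∀ n : ℕ, g x - g x' ≤ K * (C⁻¹ * D) * l⁻¹ ^ n + R * C⁻¹ * (l - 1)⁻¹ * D := by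
    intro n
    obtain ⟨y, hy, hgy⟩ := calibrated_iter hcal n x
    obtain ⟨y', hy', hd⟩ := S.back n y x'
    have h1 := subaction_iter hcal.1 n y'
    rw [hy'] at h1
    rw [hy] at hd
    have hd' : ∀ j ≤ n, dist ((cmap F)^[j] y) ((cmap F)^[j] y') ≤ C⁻¹ * D * l⁻¹ ^ (n - j) := by
      intro j hj
      have h2 := hd j hj
      rw [mul_comm, ← le_div_iff₀ (S.Cl_pos _)] at h2
      refine h2.trans (le_of_eq ?_)
      have := S.hl0
      rw [← hD, inv_pow]; field_simp
    have h3 : g y - g y' ≤ K * (C⁻¹ * D) * l⁻¹ ^ n := by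
      have h4 := hK.dist_le_mul y y'
      have h5 := hd' 0 (Nat.zero_le n)
      simp only [Function.iterate_zero, id_eq, Nat.sub_zero] at h5
      rw [Real.dist_eq] at h4
      calc g y - g y' ≤ K * dist y y' := (le_abs_self _).trans h4
        _ ≤ K * (C⁻¹ * D * l⁻¹ ^ n) := by gcongr
        _ = _ := by ring
    have h6 : ∑ j ∈ Finset.range n, (f ((cmap F)^[j] y) - beta f (cmap F)) -
        ∑ j ∈ Finset.range n, (f ((cmap F)^[j] y') - beta f (cmap F)) ≤
        R * C⁻¹ * (l - 1)⁻¹ * D := by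
      rw [← Finset.sum_sub_distrib]
      calc _ ≤ ∑ j ∈ Finset.range n, R * C⁻¹ * D * l⁻¹ ^ (n - j) := by
            refine Finset.sum_le_sum fun j hj => ?_
            have h7 := hd' j (Finset.mem_range.1 hj).le
            have h8 := (le_abs_self _).trans (hf ((cmap F)^[j] y) ((cmap F)^[j] y'))
            have h9 : R * dist ((cmap F)^[j] y) ((cmap F)^[j] y') ≤
              R * (C⁻¹ * D * l⁻¹ ^ (n - j)) := by gcongr
            linarith
        _ = R * C⁻¹ * D * ∑ j ∈ Finset.range n, l⁻¹ ^ (n - j) := by rw [Finset.mul_sum]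
        _ ≤ R * C⁻¹ * D * (l - 1)⁻¹ := by gcongr; exact S.geom_le n
        _ = _ := by ring
    linarith
  have hlim : Tendsto (fun n : ℕ => K * (C⁻¹ * D) * l⁻¹ ^ n + R * C⁻¹ * (l - 1)⁻¹ * D) atTop
      (𝓝 (K * (C⁻¹ * D) * 0 + R * C⁻¹ * (l - 1)⁻¹ * D)) :=
    ((tendsto_pow_atTop_nhds_zero_of_lt_one S.q_pos.le S.q_lt).const_mul _).add_const _
  have := ge_of_tendsto hlim (Eventually.of_forall key)
  simpa using this

/-- Limits of points of `K(f_i, T)`, when `f_i → f_0` uniformly with uniform Lipschitz bounds, lie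
in `K(f_0, T)`. Limits are taken along an ultrafilter, so that normalized sub-actions converge
pointwise without passing to subsequences. -/
lemma K_limit (S : Sys F d C l M Λ) {ι : Type*} (p : Ultrafilter ι) (f : ι → Circle1 → ℝ)
    (f0 : Circle1 → ℝ) {R : ℝ} (hR : 0 ≤ R)
    (hfR : ∀ᶠ i in (p : Filter ι), ∀ z w, |f i z - f i w| ≤ R * dist z w)
    (hf0 : Continuous f0) (hf : ∀ i, Continuous (f i))
    (hconv : ∀ ε > 0, ∀ᶠ i in (p : Filter ι), ∀ z, |f i z - f0 z| ≤ ε)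
    (x : ι → Circle1) (hx : ∀ᶠ i in (p : Filter ι), x i ∈ Kset (f i) (cmap F)) (x0 : Circle1)
    (hx0 : Tendsto x p (𝓝 x0)) : x0 ∈ Kset f0 (cmap F) := by
  have hC := S.hC
  have hl1 : 0 < l - 1 := sub_pos.2 S.hl
  have hT := S.continuous_cmap
  set T := cmap F with hTdef
  set R' := R * C⁻¹ * (l - 1)⁻¹ with hR'
  have hR'0 : 0 ≤ R' := by positivity
  have hlim : ∀ z : ι → Circle1, ∃ z0, Tendsto z p (𝓝 z0) := fun z =>
    ⟨_, (p.map z).le_nhds_lim⟩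
  have hx' : ∀ᶠ i in (p : Filter ι), ∃ g, g ∈ Gset (f i) T ∧ x i ∈ Lambda (f i) T g := by
    filter_upwards [hx] with i hi
    simpa [Kset] using hi
  obtain ⟨G, hG⟩ := hx'.choice
  have hGlip : ∀ᶠ i in (p : Filter ι), ∀ z w, |G i z - G i w| ≤ R' * dist z w := by
    filter_upwards [hG, hfR] with i hi hfi
    exact S.calib_lip hR hfi hi.1
  have hpt : ∀ z : Circle1, ∃ a, Tendsto (fun i => G i z - G i 0) p (𝓝 a) := by
    intro z
    obtain ⟨a, -, ha⟩ := (isCompact_Icc (a := -(R' * dist z 0)) (b := R' * dist z 0)).ultrafilter_le_nhds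
      (p.map fun i => G i z - G i 0) (by
        rw [le_principal_iff, Ultrafilter.coe_map, mem_map]
        filter_upwards [hGlip] with i hi
        exact abs_le.1 (hi z 0))
    exact ⟨a, ha⟩
  choose γ hγ using hpt
  have hγlip : ∀ z w, |γ z - γ w| ≤ R' * dist z w := by
    intro z w
    refine le_of_tendsto ((hγ z).sub (hγ w)).abs ?_
    filter_upwards [hGlip] with i hi
    have := hi z w
    rwa [sub_sub_sub_cancel_right]
  have hγlip' : LipschitzWith R'.toNNReal γ := LipschitzWith.of_dist_le_mul fun z w => by
    rw [Real.dist_eq, Real.coe_toNNReal _ hR'0]; exact hγlip z w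
  have hγconv : ∀ (z : ι → Circle1) (z0 : Circle1), Tendsto z p (𝓝 z0) →
      Tendsto (fun i => G i (z i) - G i 0) p (𝓝 (γ z0)) := by
    intro z z0 hz
    have h1 : Tendsto (fun i => R' * dist (z i) z0) p (𝓝 0) := by
      have := (tendsto_iff_dist_tendsto_zero.1 hz).const_mul R'
      simpa using this
    have h2 : Tendsto (fun i => G i (z i) - G i z0) p (𝓝 0) := by
      refine squeeze_zero_norm' ?_ h1
      filter_upwards [hGlip] with i hi
      exact hi _ _
    have h3 := h2.add (hγ z0)
    rw [zero_add] at h3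
    exact h3.congr fun i => by ring
  have hfconv : ∀ (z : ι → Circle1) (z0 : Circle1), Tendsto z p (𝓝 z0) →
      Tendsto (fun i => f i (z i)) p (𝓝 (f0 z0)) := by
    intro z z0 hz
    have h1 : Tendsto (fun i => f i (z i) - f0 (z i)) p (𝓝 0) := by
      rw [Metric.tendsto_nhds]
      intro ε hε
      filter_upwards [hconv (ε / 2) (half_pos hε)] with i hi
      rw [Real.dist_eq, sub_zero]
      exact (hi _).trans_lt (half_lt_self hε)
    have h2 := h1.add ((hf0.tendsto z0).comp hz)
    rw [zero_add] at h2
    exact h2.congr fun i => by simp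
  have hβ : Tendsto (fun i => beta (f i) T) p (𝓝 (beta f0 T)) := by
    rw [Metric.tendsto_nhds]
    intro ε hε
    filter_upwards [hconv (ε / 2) (half_pos hε)] with i hi
    rw [Real.dist_eq]
    exact (beta_close T (hf i) hf0 hi).trans_lt (half_lt_self hε)
  have heq : ∀ (a b : ι → Circle1) (a0 b0 : Circle1), Tendsto a p (𝓝 a0) → Tendsto b p (𝓝 b0) →
      (∀ᶠ i in (p : Filter ι), G i (a i) + f i (a i) = G i (b i) + beta (f i) T) →
      γ a0 + f0 a0 = γ b0 + beta f0 T := by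
    intro a b a0 b0 ha hb h
    have h1 := (hγconv a a0 ha).add (hfconv a a0 ha)
    have h2 := (hγconv b b0 hb).add hβ
    refine tendsto_nhds_unique (h1.congr' ?_) h2
    filter_upwards [h] with i hi
    linarith
  have hsub : IsSubaction f0 T γ := by
    refine ⟨hγlip'.continuous, fun z => ?_⟩
    have h1 := (hγ z).add (hfconv (fun _ => z) z tendsto_const_nhds)
    have h2 := (hγ (T z)).add hβ
    refine le_of_tendsto_of_tendsto h1 h2 ?_
    filter_upwards [hG] with i hi
    have := hi.1.2.1.2 z
    linarith
  have hcal : IsCalibrated f0 T γ := by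
    refine ⟨hsub, fun z => ?_⟩
    have h1 : ∀ᶠ i in (p : Filter ι), ∃ y, T y = z ∧ G i y + f i y = G i z + beta (f i) T := by
      filter_upwards [hG] with i hi
      exact hi.1.2.2 z
    obtain ⟨y, hy⟩ := h1.choice
    obtain ⟨y0, hy0⟩ := hlim y
    refine ⟨y0, ?_, heq y (fun _ => z) y0 z hy0 tendsto_const_nhds (hy.mono fun i hi => hi.2)⟩
    refine tendsto_nhds_unique ((hT.tendsto y0).comp hy0) (tendsto_const_nhds.congr' ?_)
    filter_upwards [hy] with i hi using hi.1.symm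
  simp only [Kset, mem_iUnion, exists_prop]
  refine ⟨γ, ⟨⟨_, hγlip'⟩, hcal⟩, mem_iInter.2 fun n => ?_⟩
  have h1 : ∀ᶠ i in (p : Filter ι), ∃ w, w ∈ LambdaStar (f i) T (G i) ∧ T^[n] w = x i := by
    filter_upwards [hG] with i hi
    exact mem_iInter.1 hi.2 n
  obtain ⟨w, hw⟩ := h1.choice
  obtain ⟨w0, hw0⟩ := hlim w
  refine ⟨w0, fun m => ?_, ?_⟩
  · have h2 := ((hT.iterate m).tendsto w0).comp hw0
    have h3 := (hT.tendsto _).comp h2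
    refine heq _ _ _ _ h2 h3 ?_
    filter_upwards [hw] with i hi
    exact hi.1 m
  · refine tendsto_nhds_unique (((hT.iterate n).tendsto w0).comp hw0) (hx0.congr' ?_)
    filter_upwards [hw] with i hi using hi.2.symm

lemma cr_lip {r : ℕ∞} (hr : 1 ≤ r) (f : CrFun r) : ∃ R > 0, ∀ᶠ g : CrFun r in 𝓝 f,
    ∀ z w, |g.1 z - g.1 w| ≤ R * dist z w := by
  have hr' : (1 : WithTop ℕ∞) ≤ r := by exact_mod_cast hr
  have hd : ∀ g : CrFun r, Differentiable ℝ fun x : ℝ => g.1 x := fun g =>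
    g.2.differentiable (fun h => by rw [h] at hr'; simp at hr')
  obtain ⟨B, hB, h⟩ := bdd_of_continuous (continuous_dper (f.2.of_le hr'))
  refine ⟨B + 1, by positivity, ?_⟩
  filter_upwards [cr_near f (k := 1) (by exact_mod_cast hr) one_pos] with g hg
  refine lip_of_dper (hd g) fun x => ?_
  have h1 := hg x
  have h2 := h (x : Circle1)
  rw [dper_coe] at h2
  rw [iteratedDeriv_one, iteratedDeriv_one] at h1
  have h3 := abs_sub_abs_le_abs_sub (deriv (fun x : ℝ => g.1 x) x) (deriv (fun x : ℝ => f.1 x) x)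
  linarith

lemma K_closed (S : Sys F d C l M Λ) (f0 : CrFun 2) : IsClosed (Kset f0.1 (cmap F)) := by
  obtain ⟨R, hR, hlip⟩ := cr_lip (by norm_num) f0
  rw [isClosed_iff_ultrafilter]
  intro x p hpx hp
  refine S.K_limit p (fun _ => f0.1) f0.1 hR.le (Eventually.of_forall fun _ => hlip.self_of_nhds)
    (cr_cont f0) (fun _ => cr_cont f0) (fun ε hε => Eventually.of_forall fun _ z => ?_) id hp x hpx
  simpa using hε.le

lemma K_usc (S : Sys F d C l M Λ) (f0 : CrFun 2) {W : Set Circle1} (hW : IsOpen W)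
    (hK : Kset f0.1 (cmap F) ⊆ W) : ∀ᶠ g : CrFun 2 in 𝓝 f0, Kset g.1 (cmap F) ⊆ W := by
  by_contra hcon
  rw [not_eventually, frequently_iff_neBot] at hcon
  obtain ⟨R, hR, hlip⟩ := cr_lip (by norm_num) f0
  obtain ⟨p, hp⟩ := @Ultrafilter.exists_le _ _ hcon
  have hp1 : (p : Filter (CrFun 2)) ≤ 𝓝 f0 := hp.trans inf_le_left
  have hp2 : ∀ᶠ g in (p : Filter (CrFun 2)), ∃ x, x ∈ Kset g.1 (cmap F) ∧ x ∉ W := by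
    have : ∀ᶠ g in (p : Filter (CrFun 2)), ¬ Kset g.1 (cmap F) ⊆ W :=
      hp (mem_inf_of_right (mem_principal_self _))
    filter_upwards [this] with g hg
    exact not_subset.1 hg
  obtain ⟨x, hx⟩ := hp2.choice
  have hx0 := (p.map x).le_nhds_lim
  have := S.K_limit p (fun g => g.1) f0.1 hR.le (hp1 hlip) (cr_cont f0) (fun g => cr_cont g)
    (fun ε hε => by
      filter_upwards [hp1 (cr_near f0 (k := 0) (by norm_num) hε)] with g hg z
      have := hg (rep z)
      simp only [iteratedDeriv_zero, coe_rep] at this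
      exact this.le) x (hx.mono fun g hg => hg.1) _ hx0
  have h2 := hW.isClosed_compl.mem_of_tendsto hx0 (hx.mono fun g hg => hg.2)
  exact h2 (hK this)

end Sys

/-! ### Nondegeneracy of the supercriticality functional -/

/-- The trigonometric polynomials `sin(2πx) cos(πx)^{2(N+1)} / (2π)`, whose derivatives are bounded,
equal to `1` at `0`, and tend to `0` at every other point of the circle. -/
noncomputable def bump (N : ℕ) (x : ℝ) : ℝ :=
  Real.sin (2 * Real.pi * x) / (2 * Real.pi) * (Real.cos (Real.pi * x) ^ 2) ^ (N + 1)

lemma bump_per (N : ℕ) (x : ℝ) : bump N (x + 1) = bump N x := by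
  have h1 : 2 * Real.pi * (x + 1) = 2 * Real.pi * x + 2 * Real.pi := by ring
  have h2 : Real.pi * (x + 1) = Real.pi * x + Real.pi := by ring
  rw [bump, bump, h1, h2, Real.sin_add_two_pi, Real.cos_add_pi, neg_sq]

lemma bump_hasDerivAt (N : ℕ) (x : ℝ) : HasDerivAt (bump N)
    (Real.cos (2 * Real.pi * x) * (Real.cos (Real.pi * x) ^ 2) ^ (N + 1) -
      2 * (1 - Real.cos (Real.pi * x) ^ 2) *
        ((N + 1 : ℕ) * (Real.cos (Real.pi * x) ^ 2) ^ (N + 1))) x := by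
  have hp := Real.pi_pos.ne'
  have h1 : HasDerivAt (fun x : ℝ => 2 * Real.pi * x) (2 * Real.pi) x := by
    simpa using (hasDerivAt_id x).const_mul (2 * Real.pi)
  have h2 : HasDerivAt (fun x : ℝ => Real.pi * x) Real.pi x := by
    simpa using (hasDerivAt_id x).const_mul Real.pi
  have h3 := (h1.sin.div_const (2 * Real.pi)).mul ((h2.cos.pow 2).pow (N + 1))
  refine h3.congr_deriv ?_
  have hs : 2 * Real.pi * x = 2 * (Real.pi * x) := by ring
  simp only [Pi.pow_apply, Nat.add_sub_cancel]
  rw [← Real.sin_sq, hs, Real.sin_two_mul]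
  push_cast
  field_simp
  ring

lemma bump_contDiff (N : ℕ) : ContDiff ℝ 1 (bump N) := by
  unfold bump
  fun_prop

lemma geom_aux {u : ℝ} (h0 : 0 ≤ u) (h1 : u ≤ 1) (N : ℕ) : (1 - u) * (N * u ^ N) ≤ 1 := by
  have h2 := mul_neg_geom_sum u N
  have h3 : N * u ^ N ≤ ∑ i ∈ Finset.range N, u ^ i := by
    have : ∑ i ∈ Finset.range N, u ^ N ≤ ∑ i ∈ Finset.range N, u ^ i :=
      Finset.sum_le_sum fun i hi => pow_le_pow_of_le_one h0 h1 (Finset.mem_range.1 hi).le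
    simpa using this
  have h4 : 0 ≤ u ^ N := pow_nonneg h0 N
  calc (1 - u) * (N * u ^ N) ≤ (1 - u) * ∑ i ∈ Finset.range N, u ^ i :=
        mul_le_mul_of_nonneg_left h3 (sub_nonneg.2 h1)
    _ ≤ 1 := by rw [h2]; linarith

/-- Functions whose derivatives are uniformly bounded and concentrate at the point `a`. -/
lemma exists_peak (a : Circle1) : ∃ φ : ℕ → CrFun 1, (∀ N z, |dper (φ N).1 z| ≤ 3) ∧
    (∀ N, dper (φ N).1 a = 1) ∧ ∀ z ≠ a, Tendsto (fun N => dper (φ N).1 z) atTop (𝓝 0) := by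
  have hval : ∀ (N : ℕ) (x : ℝ), bump N (rep ((x : Circle1) - a)) = bump N (x - rep a) := by
    intro N x
    rw [← per_rep (bump_per N) (x - rep a), AddCircle.coe_sub, coe_rep]
  have hcd : ∀ N, ContDiff ℝ 1 fun x : ℝ => bump N (rep ((x : Circle1) - a)) := by
    intro N
    simp only [hval]
    exact (bump_contDiff N).comp (contDiff_id.sub contDiff_const)
  have hd : ∀ (N : ℕ) (x : ℝ), dper (fun z => bump N (rep (z - a))) (x : Circle1) =
      Real.cos (2 * Real.pi * (x - rep a)) * (Real.cos (Real.pi * (x - rep a)) ^ 2) ^ (N + 1) -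
      2 * (1 - Real.cos (Real.pi * (x - rep a)) ^ 2) *
        ((N + 1 : ℕ) * (Real.cos (Real.pi * (x - rep a)) ^ 2) ^ (N + 1)) := by
    intro N x
    rw [dper_coe]
    simp only [hval]
    exact ((bump_hasDerivAt N (x - rep a)).comp_sub_const x (rep a)).deriv
  refine ⟨fun N => ⟨fun z => bump N (rep (z - a)), hcd N⟩, fun N z => ?_, fun N => ?_,
    fun z hz => ?_⟩
  · rw [← coe_rep z, hd]
    set θ := rep z - rep a
    have hu0 := sq_nonneg (Real.cos (Real.pi * θ))
    have hu1 := Real.cos_sq_le_one (Real.pi * θ)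
    have h1 := geom_aux hu0 hu1 (N + 1)
    have h2 : |Real.cos (2 * Real.pi * θ) * (Real.cos (Real.pi * θ) ^ 2) ^ (N + 1)| ≤ 1 := by
      rw [abs_mul, abs_of_nonneg (pow_nonneg hu0 _)]
      exact mul_le_one₀ (Real.abs_cos_le_one _) (pow_nonneg hu0 _) (pow_le_one₀ hu0 hu1)
    have h3 : 0 ≤ (1 - Real.cos (Real.pi * θ) ^ 2) *
        ((N + 1 : ℕ) * (Real.cos (Real.pi * θ) ^ 2) ^ (N + 1)) := by
      have := sub_nonneg.2 hu1
      positivity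
    rw [abs_le] at h2 ⊢
    constructor <;> nlinarith [h2.1, h2.2]
  · have := hd N (rep a)
    rw [coe_rep] at this
    show dper (fun z => bump N (rep (z - a))) a = 1
    rw [this]
    simp
  · have hz' : ∀ n : ℤ, rep z - rep a ≠ n := by
      intro n hn
      apply hz
      have h1 : rep z = rep a + n := by linarith
      rw [← coe_rep z, h1, coe_add_int, coe_rep]
    set θ := rep z - rep a with hθ
    have hu0 := sq_nonneg (Real.cos (Real.pi * θ))
    have hu1 : Real.cos (Real.pi * θ) ^ 2 < 1 := by
      have h1 : Real.sin (Real.pi * θ) ≠ 0 := by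
        rw [Ne, Real.sin_eq_zero_iff]
        rintro ⟨n, hn⟩
        refine hz' n ?_
        have := Real.pi_pos.ne'
        have h2 : Real.pi * n = Real.pi * θ := by rw [mul_comm, hn]
        exact (mul_left_cancel₀ this h2).symm
      have := Real.sin_sq_add_cos_sq (Real.pi * θ)
      have h2 : 0 < Real.sin (Real.pi * θ) ^ 2 := by positivity
      linarith
    have h1 := (tendsto_pow_atTop_nhds_zero_of_lt_one hu0 hu1).comp (tendsto_add_atTop_nat 1)
    have h2 := (tendsto_self_mul_const_pow_of_lt_one hu0 hu1).comp (tendsto_add_atTop_nat 1)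
    have h3 := (h1.const_mul (Real.cos (2 * Real.pi * θ))).sub
      (h2.const_mul (2 * (1 - Real.cos (Real.pi * θ) ^ 2)))
    simp only [mul_zero, sub_zero] at h3
    refine h3.congr fun N => ?_
    have := hd N (rep z)
    rw [coe_rep] at this
    show _ = dper (fun z => bump N (rep (z - a))) z
    rw [this]
    rfl

namespace Sys
variable {F : ℝ → ℝ} {d : ℕ} {C l M Λ : ℝ}

lemma Lf_sub (S : Sys F d C l M Λ) {u v : Circle1 → ℝ} (hu : Continuous u) (hv : Continuous v)
    (w : ℕ → Circle1) : Lf F (fun z => u z - v z) w = Lf F u w - Lf F v w := by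
  have h1 := S.Lf_add hv (hu.sub hv) w
  have h2 : (fun z => v z + (u - v) z) = u := by ext z; simp
  rw [h2] at h1
  rw [h1, add_sub_cancel_left]
  rfl

/-- Two different backward orbits of the same point in an invariant set without periodic points are
separated by the derivative of some function of the dense set `D`. -/
lemma exists_nonzero (S : Sys F d C l M Λ) {D : Set (CrFun 1)} (hD : Dense D) {K : Set Circle1}
    (hper : ∀ x ∈ K, ∀ n : ℕ, 1 ≤ n → (cmap F)^[n] x ≠ x) {y z : ℕ → Circle1}
    (hy : IsBack F y) (hz : IsBack F z) (hyK : ∀ k, y k ∈ K) (hzK : ∀ k, z k ∈ K)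
    (h0 : y 0 = z 0) (h1 : y 1 ≠ z 1) :
    ∃ φ ∈ D, Lf F (dper φ.1) y - Lf F (dper φ.1) z ≠ 0 := by
  obtain ⟨ψ, hψ, hψ1, hψ0⟩ := exists_peak (y 1)
  have hyne : ∀ k, k ≠ 0 → y (k + 1) ≠ y 1 := by
    intro k hk h
    have := back_iter hy k 1
    rw [add_comm 1 k, h] at this
    exact hper _ (hyK 1) k (by omega) this
  have hzne : ∀ k, z (k + 1) ≠ y 1 := by
    intro k h
    rcases Nat.eq_zero_or_pos k with rfl | hk
    · exact h1 h.symm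
    · have h2 := hz k
      rw [h, hy 0, h0] at h2
      have h3 := back_iter hz k 0
      rw [zero_add, ← h2] at h3
      exact hper _ (hzK 0) k hk h3
  have hlimy : Tendsto (fun N => Lf F (dper (ψ N).1) y) atTop
      (𝓝 (∑' k : ℕ, if k = 0 then (Dk F 1 (y 1))⁻¹ else 0)) := by
    refine tendsto_tsum_of_dominated_convergence (S.summable_bound (3 * C⁻¹)) (fun k => ?_)
      (Eventually.of_forall fun N k => S.term_le (hψ N) (k + 1) _)
    by_cases hk : k = 0
    · subst hk
      simp [hψ1]
    · rw [if_neg hk]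
      simpa using (hψ0 _ (hyne k hk)).div_const (Dk F (k + 1) (y (k + 1)))
  have hlimz : Tendsto (fun N => Lf F (dper (ψ N).1) z) atTop (𝓝 (∑' _ : ℕ, (0 : ℝ))) := by
    refine tendsto_tsum_of_dominated_convergence (S.summable_bound (3 * C⁻¹)) (fun k => ?_)
      (Eventually.of_forall fun N k => S.term_le (hψ N) (k + 1) _)
    simpa using (hψ0 _ (hzne k)).div_const (Dk F (k + 1) (z (k + 1)))
  have hlim := hlimy.sub hlimz
  rw [tsum_ite_eq, tsum_zero, sub_zero] at hlim
  obtain ⟨N, hN⟩ := (hlim.eventually_ne (inv_pos.2 (S.Dk_pos 1 (y 1))).ne').exists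
  set c := Lf F (dper (ψ N).1) y - Lf F (dper (ψ N).1) z with hc
  have hc0 : 0 < |c| := abs_pos.2 hN
  have hCl : 0 < C⁻¹ * (l - 1)⁻¹ := mul_pos (inv_pos.2 S.hC) (inv_pos.2 (sub_pos.2 S.hl))
  set ε := |c| / (4 * (C⁻¹ * (l - 1)⁻¹)) with hε
  have hε0 : 0 < ε := by positivity
  have hnear := cr_near (ψ N) (k := 1) le_rfl hε0
  obtain ⟨φ, hφ, hφD⟩ := mem_closure_iff_nhds.1 (hD (ψ N)) _ hnear
  refine ⟨φ, hφD, fun hzero => ?_⟩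
  have hcφ := continuous_dper φ.2
  have hcψ := continuous_dper (ψ N).2
  have hdiff : ∀ w : ℕ → Circle1, |Lf F (dper φ.1) w - Lf F (dper (ψ N).1) w| ≤ |c| / 4 := by
    intro w
    rw [← S.Lf_sub hcφ hcψ]
    refine (S.Lf_le (B := ε) (fun z => ?_) w).trans (le_of_eq ?_)
    · have := hφ (rep z)
      rw [iteratedDeriv_one, iteratedDeriv_one, ← dper_coe, ← dper_coe, coe_rep] at this
      exact this.le
    · rw [mul_assoc, hε, div_mul_eq_mul_div, mul_div_mul_right _ _ hCl.ne']
  have hy1 := abs_le.1 (hdiff y)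
  have hz1 := abs_le.1 (hdiff z)
  have : |c| ≤ |c| / 2 := abs_le.2 ⟨by linarith [hy1.2, hz1.1], by linarith [hy1.1, hz1.2]⟩
  linarith

end Sys

/-! ### Uniform nondegeneracy near `K(f₀, T)` -/

/-- The pairs of backward orbits contained in `N` which start at the same point and whose first
preimages are at distance at least `ρ`. -/
def pairs (F : ℝ → ℝ) (ρ : ℝ) (N : Set Circle1) : Set ((ℕ → Circle1) × (ℕ → Circle1)) :=
  {p | IsBack F p.1 ∧ IsBack F p.2 ∧ (∀ k, p.1 k ∈ N) ∧ (∀ k, p.2 k ∈ N) ∧ p.1 0 = p.2 0 ∧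
    ρ ≤ dist (p.1 1) (p.2 1)}

namespace Sys
variable {F : ℝ → ℝ} {d : ℕ} {C l M Λ : ℝ}

lemma pairs_compact (S : Sys F d C l M Λ) (ρ : ℝ) {N : Set Circle1} (hN : IsClosed N) :
    IsCompact (pairs F ρ N) := by
  apply IsClosed.isCompact
  have hT := S.continuous_cmap
  have e : pairs F ρ N = (⋂ k, {p | cmap F (p.1 (k + 1)) = p.1 k}) ∩
      ((⋂ k, {p | cmap F (p.2 (k + 1)) = p.2 k}) ∩ ((⋂ k, {p | p.1 k ∈ N}) ∩
      ((⋂ k, {p | p.2 k ∈ N}) ∩ ({p | p.1 0 = p.2 0} ∩ {p | ρ ≤ dist (p.1 1) (p.2 1)})))) := by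
    ext p
    simp [pairs, IsBack]
  have c1 : ∀ k, Continuous fun p : (ℕ → Circle1) × (ℕ → Circle1) => p.1 k := fun k =>
    (continuous_apply k).comp continuous_fst
  have c2 : ∀ k, Continuous fun p : (ℕ → Circle1) × (ℕ → Circle1) => p.2 k := fun k =>
    (continuous_apply k).comp continuous_snd
  rw [e]
  refine (isClosed_iInter fun k => isClosed_eq (hT.comp (c1 _)) (c1 k)).inter
    ((isClosed_iInter fun k => isClosed_eq (hT.comp (c2 _)) (c2 k)).inter
    ((isClosed_iInter fun k => hN.preimage (c1 k)).inter
    ((isClosed_iInter fun k => hN.preimage (c2 k)).inter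
    ((isClosed_eq (c1 0) (c2 0)).inter
    (isClosed_le continuous_const ((c1 1).dist (c2 1)))))))

/-- Finitely many functions of `D` suffice to separate, with a uniform lower bound, all pairs of
backward orbits that remain close to `K`. -/
lemma exists_family (S : Sys F d C l M Λ) {D : Set (CrFun 1)} (hD : Dense D) {K : Set Circle1}
    (hK : IsClosed K) (hper : ∀ x ∈ K, ∀ n : ℕ, 1 ≤ n → (cmap F)^[n] x ≠ x) {ρ : ℝ}
    (hρ : 0 < ρ) :
    ∃ J : ℕ, ∃ φ : Fin J → CrFun 1, (∀ j, φ j ∈ D) ∧ ∃ δ > 0, ∃ c > 0,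
      ∀ p ∈ pairs F ρ (Metric.cthickening δ K),
        ∃ j, c ≤ |Lf F (dper (φ j).1) p.1 - Lf F (dper (φ j).1) p.2| := by
  classical
  let b : CrFun 1 → ((ℕ → Circle1) × (ℕ → Circle1)) → ℝ := fun φ p =>
    Lf F (dper φ.1) p.1 - Lf F (dper φ.1) p.2
  have hb : ∀ φ, Continuous (b φ) := fun φ =>
    ((S.Lf_continuous (continuous_dper φ.2)).comp continuous_fst).sub
      ((S.Lf_continuous (continuous_dper φ.2)).comp continuous_snd)
  have hopen : ∀ φ, IsOpen {p | b φ p ≠ 0} := fun φ => isOpen_ne_fun (hb φ) continuous_const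
  obtain ⟨t, ht⟩ := (S.pairs_compact ρ hK).elim_finite_subcover
    (fun φ : D => {p | b φ.1 p ≠ 0}) (fun φ => hopen φ.1) (by
      rintro p ⟨h1, h2, h3, h4, h5, h6⟩
      obtain ⟨φ, hφ, hne⟩ := S.exists_nonzero hD hper h1 h2 h3 h4 h5
        (dist_pos.1 (hρ.trans_le h6))
      exact mem_iUnion.2 ⟨⟨φ, hφ⟩, hne⟩)
  have hWo : IsOpen (⋃ φ ∈ t, {p | b φ.1 p ≠ 0}) :=
    isOpen_biUnion fun φ _ => hopen φ.1
  obtain ⟨m, hm⟩ : ∃ m : ℕ, pairs F ρ (Metric.cthickening (1 / ((m : ℝ) + 1)) K) ⊆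
      ⋃ φ ∈ t, {p | b φ.1 p ≠ 0} := by
    refine exists_subset_nhds_of_isCompact
      (V := fun m : ℕ => pairs F ρ (Metric.cthickening (1 / ((m : ℝ) + 1)) K))
      (directed_of_isDirected_le ?_) (fun m => S.pairs_compact ρ Metric.isClosed_cthickening) ?_
    · intro i j hij p hp
      have hmono : Metric.cthickening (1 / ((j : ℝ) + 1)) K ⊆
          Metric.cthickening (1 / ((i : ℝ) + 1)) K :=
        Metric.cthickening_mono (Nat.one_div_le_one_div hij) K
      exact ⟨hp.1, hp.2.1, fun k => hmono (hp.2.2.1 k), fun k => hmono (hp.2.2.2.1 k), hp.2.2.2.2⟩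
    · intro p hp
      have hp' := mem_iInter.1 hp
      have hlim : ∀ x, (∀ m : ℕ, x ∈ Metric.cthickening (1 / ((m : ℝ) + 1)) K) → x ∈ K := by
        intro x hx
        rw [← hK.closure_eq, Metric.closure_eq_iInter_cthickening]
        refine mem_iInter₂.2 fun ε hε => ?_
        obtain ⟨m, hm⟩ := exists_nat_one_div_lt hε
        exact Metric.cthickening_mono hm.le K (hx m)
      have hpK : p ∈ pairs F ρ K :=
        ⟨(hp' 0).1, (hp' 0).2.1, fun k => hlim _ fun m => (hp' m).2.2.1 k,
          fun k => hlim _ fun m => (hp' m).2.2.2.1 k, (hp' 0).2.2.2.2⟩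
      exact hWo.mem_nhds (ht hpK)
  have hcomp := S.pairs_compact ρ (N := Metric.cthickening (1 / ((m : ℝ) + 1)) K)
    Metric.isClosed_cthickening
  obtain ⟨c, hc, hlow⟩ : ∃ c > 0, ∀ p ∈ pairs F ρ (Metric.cthickening (1 / ((m : ℝ) + 1)) K),
      c ≤ ∑ φ ∈ t, |b φ.1 p| := by
    rcases (pairs F ρ (Metric.cthickening (1 / ((m : ℝ) + 1)) K)).eq_empty_or_nonempty with he | hne
    · exact ⟨1, one_pos, fun p hp => by rw [he] at hp; exact hp.elim⟩
    · obtain ⟨p0, hp0, hmin⟩ := hcomp.exists_isMinOn hne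
        (f := fun p => ∑ φ ∈ t, |b φ.1 p|)
        (continuous_finsetSum _ fun φ _ => (hb φ.1).abs).continuousOn
      refine ⟨_, ?_, fun p hp => hmin hp⟩
      obtain ⟨φ, hφ, hne⟩ := mem_iUnion₂.1 (hm hp0)
      exact Finset.sum_pos' (fun _ _ => abs_nonneg _) ⟨φ, hφ, abs_pos.2 hne⟩
  refine ⟨t.card, fun j => (t.equivFin.symm j).1.1, fun j => (t.equivFin.symm j).1.2,
    1 / ((m : ℝ) + 1), by positivity, c / (t.card + 1), by positivity, fun p hp => ?_⟩
  by_contra! hcon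
  have h1 : ∑ φ ∈ t, |b φ.1 p| ≤ ∑ φ ∈ t, c / (t.card + 1) := by
    refine Finset.sum_le_sum fun φ hφ => ?_
    have := hcon (t.equivFin ⟨φ, hφ⟩)
    rw [Equiv.symm_apply_apply] at this
    exact this.le
  have h2 := hlow p hp
  rw [Finset.sum_const, nsmul_eq_mul] at h1
  have h3 : (t.card : ℝ) * (c / (t.card + 1)) < c := by
    rw [mul_div_assoc', div_lt_iff₀ (by positivity)]
    nlinarith
  linarith

end Sys

/-! ### Covers of orbit segments near a set of small entropy -/

namespace Sys
variable {F : ℝ → ℝ} {d : ℕ} {C l M Λ : ℝ}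

lemma exists_cover (S : Sys F d C l M Λ) {K : Set Circle1}
    (hent : Dynamics.coverEntropy (cmap F) K < (((1 / 3) * Real.log l : ℝ) : EReal))
    {ε : ℝ} (hε : 0 < ε) :
    ∃ n : ℕ, 1 ≤ n ∧ ∃ s : Finset Circle1,
      Dynamics.IsDynCoverOf (cmap F) K {p : Circle1 × Circle1 | dist p.1 p.2 < ε} n s ∧
        (s.card : ℝ) ^ 3 < l ^ n := by
  have h1 := (Dynamics.coverEntropyEntourage_le_coverEntropy (cmap F) K
    (Metric.dist_mem_uniformity hε)).trans_lt hent
  obtain ⟨a, ha1, ha2⟩ := EReal.lt_iff_exists_real_btwn.1 h1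
  have ha2 : a < 1 / 3 * Real.log l := by exact_mod_cast ha2
  obtain ⟨n, hn, hn1⟩ := ((ExpGrowth.eventually_le_exp ha1).and (eventually_ge_atTop 1)).exists
  have hcast : EReal.exp ((a : EReal) * (n : EReal)) = ENNReal.ofReal (Real.exp (a * n)) := by
    rw [← EReal.exp_coe]
    norm_cast
  rw [hcast] at hn
  have hfin : Dynamics.coverMincard (cmap F) K {p : Circle1 × Circle1 | dist p.1 p.2 < ε} n < ⊤ := by
    rw [lt_top_iff_ne_top]
    intro htop
    rw [htop] at hn
    simp at hn
  obtain ⟨s, hs, hcard⟩ := (Dynamics.coverMincard_finite_iff _ _ _ _).1 hfin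
  refine ⟨n, hn1, s, hs, ?_⟩
  rw [← hcard] at hn
  have h2 : (s.card : ℝ) ≤ Real.exp (a * n) := by
    have h3 : ENNReal.ofReal (s.card : ℝ) ≤ ENNReal.ofReal (Real.exp (a * n)) := by
      simpa using hn
    exact (ENNReal.ofReal_le_ofReal_iff (Real.exp_pos _).le).1 h3
  have hn0 : (0 : ℝ) < n := by exact_mod_cast hn1
  calc (s.card : ℝ) ^ 3 ≤ Real.exp (a * n) ^ 3 := by gcongr
    _ = Real.exp (3 * (a * n)) := by rw [← Real.exp_nat_mul]; norm_num
    _ < Real.exp (n * Real.log l) := by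
      rw [Real.exp_lt_exp]
      nlinarith
    _ = l ^ n := by rw [Real.exp_nat_mul, Real.exp_log S.hl0]

/-- Small entropy on `K` bounds the number of orbit segments of every length that remain close
to `K`, up to the resolution `2 * ε`. -/
lemma exists_cover_nbhd (S : Sys F d C l M Λ) {K : Set Circle1} (hK : IsCompact K)
    (hent : Dynamics.coverEntropy (cmap F) K < (((1 / 3) * Real.log l : ℝ) : EReal))
    {ε : ℝ} (hε : 0 < ε) :
    ∃ n : ℕ, 1 ≤ n ∧ ∃ κ : ℕ, (κ : ℝ) ^ 3 < l ^ n ∧ ∃ δ > 0, ∀ m : ℕ, ∃ t : Finset Circle1,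
      t.card ≤ κ ^ m ∧ ∀ x, (∀ k, (cmap F)^[k] x ∈ Metric.cthickening δ K) →
        ∃ c ∈ t, ∀ k < n * m, dist ((cmap F)^[k] x) ((cmap F)^[k] c) < 2 * ε := by
  obtain ⟨n, hn, s, hs, hcard⟩ := S.exists_cover hent hε
  have hsymm : SetRel.IsSymm {p : Circle1 × Circle1 | dist p.1 p.2 < ε} :=
    ⟨fun a b h => by
      have h' : dist a b < ε := h
      show dist b a < ε
      rwa [dist_comm]⟩
  -- the union of the dynamical balls is an open neighbourhood of `K`
  let W : Set Circle1 := ⋃ c ∈ s, ⋂ k ∈ Finset.range n,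
    {x | dist ((cmap F)^[k] x) ((cmap F)^[k] c) < ε}
  have hWo : IsOpen W := isOpen_biUnion fun c _ => isOpen_biInter_finset fun k _ =>
    isOpen_lt (((S.continuous_cmap.iterate k)).dist continuous_const) continuous_const
  have hKW : K ⊆ W := by
    intro x hx
    obtain ⟨c, hc, hxc⟩ := hs hx
    rw [Dynamics.mem_dynEntourage] at hxc
    exact mem_iUnion₂.2 ⟨c, hc, mem_iInter₂.2 fun k hk => hxc k (Finset.mem_range.1 hk)⟩
  obtain ⟨δ, hδ, hδW⟩ := hK.exists_cthickening_subset_open hWo hKW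
  refine ⟨n, hn, s.card, hcard, δ, hδ, fun m => ?_⟩
  let Q : Set Circle1 := {x | ∀ k, (cmap F)^[k] x ∈ Metric.cthickening δ K}
  have hQ : MapsTo (cmap F) Q Q := fun x hx k => by
    rw [← Function.iterate_succ_apply]; exact hx (k + 1)
  have hcov : Dynamics.IsDynCoverOf (cmap F) Q {p : Circle1 × Circle1 | dist p.1 p.2 < ε} n s := by
    intro x hx
    obtain ⟨c, hc, hxc⟩ := mem_iUnion₂.1 (hδW (hx 0))
    refine ⟨c, hc, ?_⟩
    rw [Dynamics.mem_dynEntourage]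
    exact fun k hk => mem_iInter₂.1 hxc k (Finset.mem_range.2 hk)
  obtain ⟨t, ht, htc⟩ := hcov.iterate_le_pow hQ m
  refine ⟨t, htc, fun x hx => ?_⟩
  obtain ⟨c, hc, hxc⟩ := ht (show x ∈ Q from hx)
  rw [Dynamics.mem_dynEntourage] at hxc
  refine ⟨c, hc, fun k hk => ?_⟩
  obtain ⟨w, hw1, hw2⟩ := hxc k hk
  have hw1 : dist ((cmap F)^[k] x) w < ε := hw1
  have hw2 : dist w ((cmap F)^[k] c) < ε := hw2
  linarith [dist_triangle ((cmap F)^[k] x) w ((cmap F)^[k] c)]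

end Sys

/-! ### Measure of the bad parameters -/

/-- The part of the unit cube between two parallel hyperplanes. -/
lemma volume_slab_le {J : ℕ} (a : ℝ) (b : Fin J → ℝ) (j : Fin J) {c η : ℝ} (hc : 0 < c)
    (hb : c ≤ |b j|) :
    volume {t : Fin J → ℝ | (∀ i, t i ∈ Icc (0 : ℝ) 1) ∧ |a + ∑ i, t i * b i| ≤ η} ≤
      ENNReal.ofReal (2 * η / c) := by
  obtain ⟨n, rfl⟩ : ∃ n, J = n + 1 := ⟨J - 1, by have := j.pos; omega⟩
  have hbj : 0 < |b j| := hc.trans_le hb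
  let e := MeasurableEquiv.piFinSuccAbove (fun _ : Fin (n + 1) => ℝ) j
  let box : Set (Fin n → ℝ) := Set.pi univ fun _ => Icc (0 : ℝ) 1
  let E : Set (ℝ × (Fin n → ℝ)) :=
    {q | q.2 ∈ box ∧ |a + (q.1 * b j + ∑ i, q.2 i * b (j.succAbove i))| ≤ η}
  have hbox : MeasurableSet box := MeasurableSet.univ_pi fun _ => measurableSet_Icc
  have hvol : volume box = 1 := by
    rw [volume_pi_pi]; simp
  have hE : MeasurableSet E := by
    refine (hbox.preimage measurable_snd).inter ?_
    have hcont : Continuous fun q : ℝ × (Fin n → ℝ) =>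
        |a + (q.1 * b j + ∑ i, q.2 i * b (j.succAbove i))| := by fun_prop
    exact (isClosed_le hcont continuous_const).measurableSet
  have hsub : {t : Fin (n + 1) → ℝ | (∀ i, t i ∈ Icc (0 : ℝ) 1) ∧ |a + ∑ i, t i * b i| ≤ η} ⊆
      e ⁻¹' E := by
    rintro t ⟨h1, h2⟩
    refine ⟨fun i _ => h1 (j.succAbove i), ?_⟩
    rw [Fin.sum_univ_succAbove _ j] at h2
    exact h2
  refine (measure_mono hsub).trans ?_
  rw [(volume_preserving_piFinSuccAbove (fun _ : Fin (n + 1) => ℝ) j).measure_preimage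
    hE.nullMeasurableSet, Measure.volume_eq_prod, Measure.prod_apply_symm hE]
  calc ∫⁻ y, volume ((fun x => (x, y)) ⁻¹' E)
      ≤ ∫⁻ y, box.indicator (fun _ => ENNReal.ofReal (2 * η / c)) y := by
        refine lintegral_mono fun y => ?_
        by_cases hy : y ∈ box
        · rw [indicator_of_mem hy]
          set s := ∑ i, y i * b (j.succAbove i) with hs
          have hss : (fun x => (x, y)) ⁻¹' E ⊆ Metric.closedBall (-(a + s) / b j) (η / c) := by
            rintro x ⟨-, hx⟩
            have hx : |a + (x * b j + s)| ≤ η := hx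
            rw [Metric.mem_closedBall, Real.dist_eq, le_div_iff₀ hc]
            have hb0 : b j ≠ 0 := abs_pos.1 hbj
            have h3 : a + (x * b j + s) = (x - -(a + s) / b j) * b j := by field_simp; ring
            rw [h3, abs_mul] at hx
            exact (mul_le_mul_of_nonneg_left hb (abs_nonneg _)).trans hx
          refine (measure_mono hss).trans ?_
          rw [Real.volume_closedBall, mul_div_assoc]
        · rw [indicator_of_notMem hy]
          have : (fun x => (x, y)) ⁻¹' E = ∅ := by
            ext x
            simp only [mem_preimage, mem_empty_iff_false, iff_false]
            exact fun h => hy h.1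
          rw [this]
          simp
    _ = ENNReal.ofReal (2 * η / c) := by
        rw [lintegral_indicator_const hbox, hvol, mul_one]

namespace Sys
variable {F : ℝ → ℝ} {d : ℕ} {C l M Λ : ℝ}

/-- If two backward orbits follow each other for `n` steps, and so do the forward orbits of their
base points, then the values of `Lf` are exponentially close. -/
lemma orbit_close (S : Sys F d C l M Λ) {B R : ℝ} (hB0 : 0 ≤ B) (hR0 : 0 ≤ R) :
    ∃ A > 0, ∀ u : Circle1 → ℝ, (∀ z, |u z| ≤ B) → (∀ z w, |u z - u w| ≤ R * dist z w) →
      ∀ y y' : ℕ → Circle1, IsBack F y → IsBack F y' → ∀ n : ℕ, 1 ≤ n →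
        (∀ k < n, dist ((cmap F)^[k] (y 0)) ((cmap F)^[k] (y' 0)) < 1 / (2 * (M + 1))) →
        (∀ k < n, dist ((cmap F)^[k] (y n)) ((cmap F)^[k] (y' n)) < 1 / (2 * (M + 1))) →
        |Lf F u y - Lf F u y'| ≤ A * l⁻¹ ^ n := by
  obtain ⟨A, hA, hclose⟩ := S.Lf_close hB0 hR0
  have hl0 := S.hl0
  have hC := S.hC
  have hM := S.hM
  refine ⟨A * (C⁻¹ * l + 1), by positivity, fun u hB hR y y' hy hy' n hn h0 h1 => ?_⟩
  have hk : ∀ k ≤ n, dist (y k) (y' k) < 1 / (2 * (M + 1)) := by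
    intro k hk
    rcases Nat.eq_zero_or_pos k with rfl | hk0
    · exact h0 0 (by omega)
    · have := h1 (n - k) (by omega)
      have e1 := back_iter hy (n - k) k
      have e2 := back_iter hy' (n - k) k
      rw [Nat.add_sub_cancel' hk] at e1 e2
      rwa [e1, e2] at this
  refine (hclose u hB hR y y' hy hy' n hk).trans ?_
  have hs := S.shadow (n := n - 1) (fun j hj => h0 j (by omega)) (j := 0) (by omega)
  have hlast := h0 (n - 1) (by omega)
  have hρ : 1 / (2 * (M + 1)) ≤ 1 := by
    rw [div_le_one (by positivity)]; linarith
  have h2 : C * l ^ (n - 1) * dist (y 0) (y' 0) ≤ 1 := by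
    simp only [Nat.sub_zero, Function.iterate_zero, id] at hs
    exact hs.trans (hlast.le.trans hρ)
  have h3 : dist (y 0) (y' 0) ≤ C⁻¹ * l * l⁻¹ ^ n := by
    obtain ⟨q, rfl⟩ : ∃ q, n = q + 1 := ⟨n - 1, by omega⟩
    have e : C⁻¹ * l * l⁻¹ ^ (q + 1) = 1 / (C * l ^ q) := by
      rw [pow_succ, inv_pow]; field_simp
    rw [e, le_div_iff₀ (by positivity), mul_comm]
    simpa using h2
  calc A * (dist (y 0) (y' 0) + l⁻¹ ^ n) ≤ A * (C⁻¹ * l * l⁻¹ ^ n + l⁻¹ ^ n) := by gcongr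
    _ = A * (C⁻¹ * l + 1) * l⁻¹ ^ n := by ring

/-- A family of functions that is uniformly nondegenerate on the pairs of backward orbits in `Q`
makes the equality of the two values of `Lf` a null event, provided that the orbit segments of
length `n * m` in `Q` are covered by `κ ^ m` dynamical balls with `κ ^ 3 < l ^ n`. -/
lemma null_params (S : Sys F d C l M Λ) {J : ℕ} {v : Circle1 → ℝ} {w : Fin J → Circle1 → ℝ}
    (hv : Continuous v) (hw : ∀ j, Continuous (w j))
    {Rv : ℝ} {Rw : Fin J → ℝ} (hRv : ∀ x y, |v x - v y| ≤ Rv * dist x y)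
    (hRv0 : 0 ≤ Rv) (hRw0 : ∀ j, 0 ≤ Rw j)
    (hRw : ∀ j x y, |w j x - w j y| ≤ Rw j * dist x y)
    {Q : Set Circle1} {c : ℝ} (hc : 0 < c)
    (hlow : ∀ p ∈ pairs F (1 / (2 * (M + 1))) Q, ∃ j, c ≤ |Lf F (w j) p.1 - Lf F (w j) p.2|)
    {n κ : ℕ} (hn : 1 ≤ n) (hκ : (κ : ℝ) ^ 3 < l ^ n)
    (hcov : ∀ m : ℕ, ∃ t : Finset Circle1, t.card ≤ κ ^ m ∧ ∀ x ∈ Q, ∃ e ∈ t, ∀ k < n * m,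
      dist ((cmap F)^[k] x) ((cmap F)^[k] e) < 1 / (2 * (M + 1)) / 2) :
    volume {t : Fin J → ℝ | (∀ i, t i ∈ Icc (0 : ℝ) 1) ∧
      ∃ p ∈ pairs F (1 / (2 * (M + 1))) Q, Lf F (fun z => v z + ∑ j, t j * w j z) p.1 =
        Lf F (fun z => v z + ∑ j, t j * w j z) p.2} = 0 := by
  have hl0 := S.hl0
  set ρ := 1 / (2 * (M + 1)) with hρdef
  set bad := {t : Fin J → ℝ | (∀ i, t i ∈ Icc (0 : ℝ) 1) ∧
      ∃ p ∈ pairs F ρ Q, Lf F (fun z => v z + ∑ j, t j * w j z) p.1 =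
        Lf F (fun z => v z + ∑ j, t j * w j z) p.2} with hbad
  -- bounds which are uniform in the parameter
  obtain ⟨Bv, hBv0, hBv⟩ := bdd_of_continuous hv
  choose Bw hBw0 hBw using fun j => bdd_of_continuous (hw j)
  have hB0 : 0 ≤ Bv + ∑ j, Bw j := add_nonneg hBv0.le (Finset.sum_nonneg fun j _ => (hBw0 j).le)
  have hR0 : 0 ≤ Rv + ∑ j, Rw j := add_nonneg hRv0 (Finset.sum_nonneg fun j _ => hRw0 j)
  obtain ⟨A, hA, hclose⟩ := S.orbit_close hB0 hR0
  have hub : ∀ t : Fin J → ℝ, (∀ i, t i ∈ Icc (0 : ℝ) 1) → ∀ z,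
      |v z + ∑ j, t j * w j z| ≤ Bv + ∑ j, Bw j := by
    intro t ht z
    refine (abs_add_le _ _).trans (add_le_add (hBv z) ?_)
    refine (Finset.abs_sum_le_sum_abs _ _).trans (Finset.sum_le_sum fun j _ => ?_)
    rw [abs_mul, abs_of_nonneg (ht j).1]
    exact (mul_le_of_le_one_left (abs_nonneg _) (ht j).2).trans (hBw j z)
  have hul : ∀ t : Fin J → ℝ, (∀ i, t i ∈ Icc (0 : ℝ) 1) → ∀ x y,
      |(v x + ∑ j, t j * w j x) - (v y + ∑ j, t j * w j y)| ≤
        (Rv + ∑ j, Rw j) * dist x y := by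
    intro t ht x y
    have e : (v x + ∑ j, t j * w j x) - (v y + ∑ j, t j * w j y) =
        (v x - v y) + ∑ j, t j * (w j x - w j y) := by
      simp only [mul_sub, Finset.sum_sub_distrib]; ring
    rw [e, add_mul, Finset.sum_mul]
    refine (abs_add_le _ _).trans (add_le_add (hRv x y) ?_)
    refine (Finset.abs_sum_le_sum_abs _ _).trans (Finset.sum_le_sum fun j _ => ?_)
    rw [abs_mul, abs_of_nonneg (ht j).1]
    exact (mul_le_of_le_one_left (abs_nonneg _) (ht j).2).trans (hRw j x y)
  have key : ∀ m : ℕ, 1 ≤ m →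
      volume bad ≤ ENNReal.ofReal (2 * (2 * A) / c * ((κ : ℝ) ^ 3 / l ^ n) ^ m) := by
    intro m hm
    obtain ⟨T, hT, hTc⟩ := hcov m
    have hnm : 1 ≤ n * m := Nat.mul_pos hn hm
    -- the parameters for which the bad pair is followed by a given triple of centres
    let cell : Circle1 × Circle1 × Circle1 → Set ((ℕ → Circle1) × (ℕ → Circle1)) := fun e =>
      {p | p ∈ pairs F ρ Q ∧ ∀ k < n * m,
        dist ((cmap F)^[k] (p.1 0)) ((cmap F)^[k] e.1) < ρ / 2 ∧
        dist ((cmap F)^[k] (p.1 (n * m))) ((cmap F)^[k] e.2.1) < ρ / 2 ∧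
        dist ((cmap F)^[k] (p.2 (n * m))) ((cmap F)^[k] e.2.2) < ρ / 2}
    let piece : Circle1 × Circle1 × Circle1 → Set (Fin J → ℝ) := fun e =>
      {t | (∀ i, t i ∈ Icc (0 : ℝ) 1) ∧ ∃ p ∈ cell e,
        Lf F (fun z => v z + ∑ j, t j * w j z) p.1 =
        Lf F (fun z => v z + ∑ j, t j * w j z) p.2}
    have hsub : bad ⊆ ⋃ e ∈ T ×ˢ T ×ˢ T, piece e := by
      rintro t ⟨ht, p, hp, hpt⟩
      obtain ⟨e1, he1, h1⟩ := hTc _ (hp.2.2.1 0)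
      obtain ⟨e2, he2, h2⟩ := hTc _ (hp.2.2.1 (n * m))
      obtain ⟨e3, he3, h3⟩ := hTc _ (hp.2.2.2.1 (n * m))
      refine mem_iUnion₂.2 ⟨(e1, e2, e3), by simp [he1, he2, he3], ht, p, ⟨hp, fun k hk => ?_⟩, hpt⟩
      exact ⟨h1 k hk, h2 k hk, h3 k hk⟩
    have hpiece : ∀ e, volume (piece e) ≤ ENNReal.ofReal (2 * (2 * A * l⁻¹ ^ (n * m)) / c) := by
      intro e
      rcases (cell e).eq_empty_or_nonempty with he | ⟨q, hq⟩
      · have : piece e = ∅ := by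
          ext t
          simp only [mem_empty_iff_false, iff_false]
          rintro ⟨-, p, hp, -⟩
          rw [he] at hp
          exact hp
        rw [this]
        simp
      · obtain ⟨j, hj⟩ := hlow q hq.1
        refine (measure_mono ?_).trans (volume_slab_le (Lf F v q.1 - Lf F v q.2)
          (fun j => Lf F (w j) q.1 - Lf F (w j) q.2) j hc hj)
        rintro t ⟨ht, p, hp, hpt⟩
        refine ⟨ht, ?_⟩
        have near : ∀ {a b r : Circle1}, dist a r < ρ / 2 → dist b r < ρ / 2 → dist a b < ρ :=
          fun h1 h2 => by linarith [dist_triangle_right _ _ _ |>.trans_lt (add_lt_add h1 h2)]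
        have c1 := hclose _ (hub t ht) (hul t ht) q.1 p.1 hq.1.1 hp.1.1 (n * m) hnm
          (fun k hk => near (hq.2 k hk).1 (hp.2 k hk).1)
          (fun k hk => near (hq.2 k hk).2.1 (hp.2 k hk).2.1)
        have c2 := hclose _ (hub t ht) (hul t ht) q.2 p.2 hq.1.2.1 hp.1.2.1 (n * m) hnm
          (fun k hk => by
            rw [← hq.1.2.2.2.2.1, ← hp.1.2.2.2.2.1]
            exact near (hq.2 k hk).1 (hp.2 k hk).1)
          (fun k hk => near (hq.2 k hk).2.2 (hp.2 k hk).2.2)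
        have e3 : Lf F v q.1 - Lf F v q.2 + ∑ j, t j * (Lf F (w j) q.1 - Lf F (w j) q.2) =
            Lf F (fun z => v z + ∑ j, t j * w j z) q.1 -
              Lf F (fun z => v z + ∑ j, t j * w j z) q.2 := by
          rw [S.Lf_sum hv hw, S.Lf_sum hv hw]
          simp only [mul_sub, Finset.sum_sub_distrib]
          ring
        show |Lf F v q.1 - Lf F v q.2 + ∑ j, t j * (Lf F (w j) q.1 - Lf F (w j) q.2)| ≤ _
        rw [e3]
        rw [abs_le] at c1 c2 ⊢
        constructor <;> linarith [c1.1, c1.2, c2.1, c2.2]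
    calc volume bad ≤ ∑ e ∈ T ×ˢ T ×ˢ T, volume (piece e) :=
          (measure_mono hsub).trans (measure_biUnion_finset_le _ _)
      _ ≤ ∑ e ∈ T ×ˢ T ×ˢ T, ENNReal.ofReal (2 * (2 * A * l⁻¹ ^ (n * m)) / c) :=
          Finset.sum_le_sum fun e _ => hpiece e
      _ = ENNReal.ofReal ((T.card : ℝ) ^ 3 * (2 * (2 * A * l⁻¹ ^ (n * m)) / c)) := by
          rw [Finset.sum_const, Finset.card_product, Finset.card_product, nsmul_eq_mul,
            ENNReal.ofReal_mul (by positivity), ← ENNReal.ofReal_natCast]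
          congr 2
          push_cast
          ring
      _ ≤ ENNReal.ofReal (2 * (2 * A) / c * ((κ : ℝ) ^ 3 / l ^ n) ^ m) := by
          apply ENNReal.ofReal_le_ofReal
          have h1 : (T.card : ℝ) ≤ (κ : ℝ) ^ m := by exact_mod_cast hT
          calc (T.card : ℝ) ^ 3 * (2 * (2 * A * l⁻¹ ^ (n * m)) / c)
              ≤ ((κ : ℝ) ^ m) ^ 3 * (2 * (2 * A * l⁻¹ ^ (n * m)) / c) := by gcongr
            _ = 2 * (2 * A) / c * ((κ : ℝ) ^ 3 / l ^ n) ^ m := by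
              rw [div_pow, ← pow_mul, ← pow_mul, ← pow_mul, mul_comm 3 m, inv_pow]
              ring
  have hr : (κ : ℝ) ^ 3 / l ^ n < 1 := (div_lt_one (by positivity)).2 hκ
  have hlim : Tendsto (fun m : ℕ => ENNReal.ofReal (2 * (2 * A) / c * ((κ : ℝ) ^ 3 / l ^ n) ^ m))
      atTop (𝓝 0) := by
    have h1 := (tendsto_pow_atTop_nhds_zero_of_lt_one (by positivity) hr).const_mul
      (2 * (2 * A) / c)
    rw [mul_zero] at h1
    simpa using ENNReal.tendsto_ofReal h1
  refine le_antisymm (ge_of_tendsto hlim ?_) zero_le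
  filter_upwards [eventually_ge_atTop 1] with m hm using key m hm

end Sys

/-! ### From supercritical values to pairs of backward orbits -/

lemma dper_comb {J : ℕ} {f g : Circle1 → ℝ} {φ : Fin J → Circle1 → ℝ} {t : Fin J → ℝ}
    (hf : Differentiable ℝ fun x : ℝ => f x) (hφ : ∀ j, Differentiable ℝ fun x : ℝ => φ j x)
    (hg : g = fun z => f z + ∑ j, t j • φ j z) :
    dper g = fun z => dper f z + ∑ j, t j * dper (φ j) z := by
  ext z
  subst hg
  have h1 : HasDerivAt (fun x : ℝ => f x + ∑ j, t j • φ j x)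
      (dper f z + ∑ j, t j * dper (φ j) z) (rep z) := by
    refine (hf _).hasDerivAt.add (HasDerivAt.fun_sum fun j _ => ?_)
    exact ((hφ j) _).hasDerivAt.const_mul (t j)
  exact h1.deriv

namespace Sys
variable {F : ℝ → ℝ} {d : ℕ} {C l M Λ : ℝ}

/-- Words with distinct first letters code backward orbits with distinct first preimages. -/
lemma tau_ne (S : Sys F d C l M Λ) {i j : ℕ → Fin d} (h : i 0 ≠ j 0) (x : ℝ) :
    ((tauIter F i 1 x : ℝ) : Circle1) ≠ ((tauIter F j 1 x : ℝ) : Circle1) := by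
  intro he
  obtain ⟨k, hk⟩ := coe_eq_coe he
  have hp : Function.Periodic (fun x => F x - d * x) 1 := fun x => by
    show F (x + 1) - d * (x + 1) = F x - d * x
    rw [S.per]; ring
  have h1 := hp.int_mul k (tauIter F j 1 x)
  have e1 : F (tauIter F i 1 x) = x + ((i 0 : ℕ) : ℝ) := S.iF_right _
  have e2 : F (tauIter F j 1 x) = x + ((j 0 : ℕ) : ℝ) := S.iF_right _
  have e3 : tauIter F j 1 x + k * 1 = tauIter F i 1 x := by linarith
  simp only [e3, e1, e2] at h1
  have h2 : (((i 0 : ℕ) : ℤ) : ℝ) - (((j 0 : ℕ) : ℤ) : ℝ) = ((d : ℤ) : ℝ) * k := by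
    push_cast
    have : (d : ℝ) * (tauIter F i 1 x - tauIter F j 1 x) = d * k := by rw [hk]
    linarith
  have h3 : ((i 0 : ℕ) : ℤ) - ((j 0 : ℕ) : ℤ) = d * k := by exact_mod_cast h2
  have hi : ((i 0 : ℕ) : ℤ) < d := by exact_mod_cast (i 0).2
  have hj : ((j 0 : ℕ) : ℤ) < d := by exact_mod_cast (j 0).2
  have h4 : ((i 0 : ℕ) : ℤ) - ((j 0 : ℕ) : ℤ) = 0 :=
    Int.eq_zero_of_abs_lt_dvd ⟨k, h3⟩ (abs_lt.2 ⟨by omega, by omega⟩)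
  exact h (Fin.ext (by omega))

/-- A supercritical value provides two backward orbits on which `Lf` takes the same value. -/
lemma exists_pair (S : Sys F d C l M Λ) {g : Circle1 → ℝ} (hg : ContDiff ℝ 1 fun x : ℝ => g x)
    {K : Set Circle1} {x : ℝ} (hx : IsSupercriticalValue F d g K x) :
    ∃ p ∈ pairs F (1 / (2 * (M + 1))) K, Lf F (dper g) p.1 = Lf F (dper g) p.2 := by
  obtain ⟨hxK, i, j, hi, hj, hij, hd⟩ := hx
  rw [S.deriv_hSum i hg, S.deriv_hSum j hg] at hd
  have hmem : ∀ {i : ℕ → Fin d}, WordIn F i x K → ∀ k, ((tauIter F i k x : ℝ) : Circle1) ∈ K := by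
    intro i hi k
    rcases Nat.eq_zero_or_pos k with rfl | hk
    · exact hxK
    · exact hi k hk
  refine ⟨(_, _), ⟨S.tau_back i x, S.tau_back j x, hmem hi, hmem hj, rfl, ?_⟩, hd⟩
  by_contra hlt
  exact S.tau_ne hij x (S.loc_inj ((S.tau_back i x 0).trans (S.tau_back j x 0).symm)
    (not_le.1 hlt))

end Sys

/-- Theorem 4.1: shyness of the existence of supercritical values near a function `f_0`
with small entropy and no periodic points in `K(f_0)`. -/
theorem supercritical_shy (F : ℝ → ℝ) (d : ℕ) (hF : AnalyticExpandingLift F d)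
    (C l : ℝ) (hC : 0 < C) (hl : 1 < l)
    (hexp : ∀ n : ℕ, 1 ≤ n → ∀ x : ℝ, C * l ^ n ≤ |deriv (F^[n]) x|)
    (D : Set (CrFun 1)) (hDdense : Dense D)
    (hD2 : ∀ g ∈ D, ContDiff ℝ 2 fun x : ℝ => g.1 ↑x)
    (f0 : CrFun 2)
    (hent : Dynamics.coverEntropy (cmap F) (Kset f0.1 (cmap F)) <
      (((1 / 3) * Real.log l : ℝ) : EReal))
    (hper : ∀ x ∈ Kset f0.1 (cmap F), ∀ n : ℕ, 1 ≤ n → (cmap F)^[n] x ≠ x) :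
    ∃ U : Set (CrFun 2), IsOpen U ∧ f0 ∈ U ∧
      ∃ J : ℕ, ∃ φ : Fin J → CrFun 1, (∀ j, φ j ∈ D) ∧
        ∀ f : CrFun 2,
          volume {t : Fin J → ℝ | (∀ i, t i ∈ Set.Icc (0 : ℝ) 1) ∧
            ∃ g : CrFun 2, (g.1 = fun z => f.1 z + ∑ j, t j • (φ j).1 z) ∧ g ∈ U ∧
              ∃ x : ℝ, IsSupercriticalValue F d g.1 (Kset g.1 (cmap F)) x} = 0 := by
  obtain ⟨C', M, Λ, S⟩ := exists_sys hF hC hl hexp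
  have hM := S.hM
  have hρ : 0 < 1 / (2 * (M + 1)) := by positivity
  have hKc := S.K_closed f0
  obtain ⟨J, φ, hφD, δ₁, hδ₁, c, hc, hlow⟩ := S.exists_family hDdense hKc hper hρ
  obtain ⟨n, hn, κ, hκ, δ₂, hδ₂, hcov⟩ := S.exists_cover_nbhd hKc.isCompact hent
    (ε := 1 / (2 * (M + 1)) / 4) (by positivity)
  set K := Kset f0.1 (cmap F) with hK
  set δ := min δ₁ δ₂ with hδdef
  have hδ : 0 < δ := lt_min hδ₁ hδ₂
  have hm1 : Metric.cthickening δ K ⊆ Metric.cthickening δ₁ K :=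
    Metric.cthickening_mono (min_le_left _ _) K
  have hm2 : Metric.cthickening δ K ⊆ Metric.cthickening δ₂ K :=
    Metric.cthickening_mono (min_le_right _ _) K
  -- the maximal forward invariant subset of the closed neighbourhood
  let Q : Set Circle1 := {x | ∀ k, (cmap F)^[k] x ∈ Metric.cthickening δ K}
  have husc := S.K_usc f0 (Metric.isOpen_thickening (δ := δ) (E := K))
    (Metric.self_subset_thickening hδ K)
  refine ⟨interior {g : CrFun 2 | Kset g.1 (cmap F) ⊆ Metric.thickening δ K}, isOpen_interior,
    mem_interior_iff_mem_nhds.2 husc, J, φ, hφD, fun f => ?_⟩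
  have hf2 : ContDiff ℝ 2 fun x : ℝ => f.1 x := f.2
  have hf1 : ContDiff ℝ 1 fun x : ℝ => f.1 x := hf2.of_le one_le_two
  obtain ⟨Rv, hRv0, hRv⟩ := dper_lip hf2
  choose Rw hRw0 hRw using fun j => dper_lip (hD2 (φ j) (hφD j))
  refine measure_mono_null ?_ (S.null_params (J := J) (v := dper f.1) (w := fun j => dper (φ j).1)
    (continuous_dper hf1) (fun j => continuous_dper (φ j).2) hRv hRv0.le (fun j => (hRw0 j).le)
    hRw (Q := Q) hc ?_ hn hκ ?_)
  · rintro t ⟨ht, g, hg, hgU, x, hx⟩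
    have hgK : Kset g.1 (cmap F) ⊆ Q := by
      have h1 : ∀ k, ∀ z ∈ Kset g.1 (cmap F), (cmap F)^[k] z ∈ Kset g.1 (cmap F) := by
        intro k
        induction k with
        | zero => exact fun z hz => hz
        | succ k ih =>
          intro z hz
          rw [Function.iterate_succ_apply]
          exact ih _ (Lambda_invariant hz)
      exact fun z hz k => Metric.thickening_subset_cthickening _ _ (interior_subset hgU (h1 k z hz))
    have hg2 : ContDiff ℝ 2 fun x : ℝ => g.1 x := g.2
    obtain ⟨p, hp, hpe⟩ := S.exists_pair (hg2.of_le one_le_two) hx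
    refine ⟨ht, p, ⟨hp.1, hp.2.1, fun k => hgK (hp.2.2.1 k), fun k => hgK (hp.2.2.2.1 k),
      hp.2.2.2.2⟩, ?_⟩
    have hcomb := dper_comb (hf1.differentiable one_ne_zero)
      (fun j => (show ContDiff ℝ 1 fun x : ℝ => (φ j).1 x from (φ j).2).differentiable
        one_ne_zero) hg
    rwa [hcomb] at hpe
  · rintro p hp
    exact hlow p ⟨hp.1, hp.2.1, fun k => hm1 (hp.2.2.1 k 0), fun k => hm1 (hp.2.2.2.1 k 0),
      hp.2.2.2.2⟩
  · intro m
    obtain ⟨t, ht, htc⟩ := hcov m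
    refine ⟨t, ht, fun x hx => ?_⟩
    obtain ⟨e, he, h⟩ := htc x fun k => hm2 (hx k)
    exact ⟨e, he, fun k hk => (h k hk).trans_eq (by ring)⟩
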